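/- Suppose b < a. For every c ∈ ℝ, with t_N = ⌊(N/(2b))·(log N − c)⌋ and N = 2n, liminf_{N→∞} d_TV(U, P^{t_N}(id, ·)) ≥ d_TV(Poisson(1 + e^c/2), Poisson(1)). -/

import Mathlib

open scoped BigOperators

noncomputable section

namespace BRT

/-- The transition matrix of the biased random transposition shuffle on `𝔖_N` determined
by the set `A ⊆ [N]` (with `B = Aᶜ`) and the bias parameters `a`, `b`:
`P(x,y) = 2a²/N²` if `y x⁻¹` is a transposition of two elements of `A`, `2b²/N²` if it is a
transposition of two elements of `B`, `2ab/N²` if it transposes an element of `A` with one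
of `B`, `(a²|A| + b²|B|)/N²` if `y = x`, and `0` otherwise. -/
def transMat (a b : ℝ) {N : ℕ} (A : Finset (Fin N)) :
    Matrix (Equiv.Perm (Fin N)) (Equiv.Perm (Fin N)) ℝ :=
  fun x y =>
    if y = x then (a ^ 2 * A.card + b ^ 2 * Aᶜ.card) / (N : ℝ) ^ 2
    else if ∃ i j : Fin N, i ≠ j ∧ i ∈ A ∧ j ∈ A ∧ y * x⁻¹ = Equiv.swap i j then
      2 * a ^ 2 / (N : ℝ) ^ 2
    else if ∃ i j : Fin N, i ≠ j ∧ i ∉ A ∧ j ∉ A ∧ y * x⁻¹ = Equiv.swap i j then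
      2 * b ^ 2 / (N : ℝ) ^ 2
    else if ∃ i j : Fin N, i ∈ A ∧ j ∉ A ∧ y * x⁻¹ = Equiv.swap i j then
      2 * a * b / (N : ℝ) ^ 2
    else 0

/-- Total variation distance between two probability mass functions on a finite type. -/
def dTV {α : Type*} [Fintype α] (p q : α → ℝ) : ℝ :=
  (∑ x, |p x - q x|) / 2

/-- The uniform distribution on permutations of `Fin N`. -/
def unif (N : ℕ) : Equiv.Perm (Fin N) → ℝ :=
  fun _ => ((N.factorial : ℝ))⁻¹

/-- The probability mass function of the Poisson distribution with mean `lam`. -/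
def poissonPMF (lam : ℝ) (k : ℕ) : ℝ :=
  Real.exp (-lam) * lam ^ k / (k.factorial : ℝ)

/-- Total variation distance between two probability mass functions on `ℕ`. -/
def dTVNat (p q : ℕ → ℝ) : ℝ :=
  (∑' k : ℕ, |p k - q k|) / 2

/-- tuple kernel -/
def Pt {N : ℕ} (k : ℕ) (w : Fin N → ℝ) : Matrix (Fin k → Fin N) (Fin k → Fin N) ℝ :=
  fun v u => ∑ i, ∑ j, w i * w j / (N : ℝ) ^ 2 *
    (if (fun s => Equiv.swap i j (v s)) = u then 1 else 0)

/-- product kernel -/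
def Qt {N : ℕ} (k : ℕ) (w : Fin N → ℝ) : Matrix (Fin k → Fin N) (Fin k → Fin N) ℝ :=
  fun v u => (if v = u then 1 - ∑ s, 2 * w (v s) / (N : ℝ) else 0) +
    ∑ s, ∑ j, 2 * w (v s) * w j / (N : ℝ) ^ 2 * (if Function.update v s j = u then 1 else 0)

lemma sum_split {N k : ℕ} (v : Fin k → Fin N) (hv : Function.Injective v) (f : Fin N → ℝ) :
    ∑ i, f i = ∑ i ∈ (Finset.univ.image v)ᶜ, f i + ∑ s, f (v s) := by
  rw [← Finset.sum_compl_add_sum (Finset.univ.image v) f, Finset.sum_image (by intro a _ b _ h; exact hv h)]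

lemma swap_out {N k : ℕ} (v : Fin k → Fin N) {i j : Fin N}
    (hi : i ∈ (Finset.univ.image v)ᶜ) (hj : j ∈ (Finset.univ.image v)ᶜ) :
    (fun s => Equiv.swap i j (v s)) = v := by
  funext s
  simp only [Finset.mem_compl, Finset.mem_image, Finset.mem_univ, true_and, not_exists] at hi hj
  exact Equiv.swap_apply_of_ne_of_ne (hi s) (hj s)

lemma swap_in_out {N k : ℕ} (v : Fin k → Fin N) (hv : Function.Injective v) (s : Fin k) {j : Fin N}
    (hj : j ∈ (Finset.univ.image v)ᶜ) :
    (fun r => Equiv.swap (v s) j (v r)) = Function.update v s j := by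
  funext r
  simp only [Finset.mem_compl, Finset.mem_image, Finset.mem_univ, true_and, not_exists] at hj
  by_cases h : r = s
  · subst h; simp
  · rw [Function.update_of_ne h]
    exact Equiv.swap_apply_of_ne_of_ne (fun h' => h (hv h')) (hj r)

lemma swap_out_in {N k : ℕ} (v : Fin k → Fin N) (hv : Function.Injective v) (s : Fin k) {j : Fin N}
    (hj : j ∈ (Finset.univ.image v)ᶜ) :
    (fun r => Equiv.swap j (v s) (v r)) = Function.update v s j := by
  simp_rw [Equiv.swap_comm j (v s)]
  exact swap_in_out v hv s hj

lemma swap_in_in {N k : ℕ} (v : Fin k → Fin N) (hv : Function.Injective v) (s r : Fin k) :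
    (fun q => Equiv.swap (v s) (v r) (v q)) = v ∘ Equiv.swap s r := by
  funext q
  simp only [Function.comp]
  rw [hv.swap_apply]

lemma Pt_eq {N k : ℕ} (w : Fin N → ℝ) (hw : ∑ i, w i = N) (hN : (N : ℝ) ≠ 0)
    (v u : Fin k → Fin N) (hv : Function.Injective v)
    (hu : Function.Injective u) :
    Pt k w v u = Qt k w v u +
      (if v = u then ((∑ s, w (v s)) ^ 2 - 2 * ∑ s, w (v s) ^ 2) / (N : ℝ) ^ 2 else 0) +
      ∑ s, ∑ r, w (v s) * w (v r) / (N : ℝ) ^ 2 * (if v ∘ Equiv.swap s r = u then 1 else 0) := by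
  have hout : ∑ i ∈ (Finset.univ.image v)ᶜ, w i = N - ∑ s, w (v s) := by
    rw [← hw, sum_split v hv]; ring
  set S := (Finset.univ.image v)ᶜ with hS
  have h1 : Pt k w v u =
      (∑ i ∈ S, ∑ j ∈ S, w i * w j / (N : ℝ) ^ 2 * (if v = u then 1 else 0))
      + 2 * (∑ s, ∑ j ∈ S, w (v s) * w j / (N : ℝ) ^ 2 * (if Function.update v s j = u then 1 else 0))
      + ∑ s, ∑ r, w (v s) * w (v r) / (N : ℝ) ^ 2 * (if v ∘ Equiv.swap s r = u then 1 else 0) := by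
    unfold Pt
    rw [sum_split v hv]
    simp_rw [sum_split v hv (fun j => w _ * w j / (N : ℝ) ^ 2 * _)]
    rw [Finset.sum_add_distrib, Finset.sum_add_distrib, two_mul]
    have e1 : ∑ i ∈ S, ∑ j ∈ S, w i * w j / (N : ℝ) ^ 2 *
        (if (fun s => Equiv.swap i j (v s)) = u then 1 else 0) =
        ∑ i ∈ S, ∑ j ∈ S, w i * w j / (N : ℝ) ^ 2 * (if v = u then (1:ℝ) else 0) :=
      Finset.sum_congr rfl fun i hi => Finset.sum_congr rfl fun j hj => by
        rw [swap_out v hi hj]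
    have e2 : ∑ i ∈ S, ∑ s, w i * w (v s) / (N : ℝ) ^ 2 *
        (if (fun r => Equiv.swap i (v s) (v r)) = u then 1 else 0) =
        ∑ s, ∑ j ∈ S, w (v s) * w j / (N : ℝ) ^ 2 *
          (if Function.update v s j = u then (1:ℝ) else 0) := by
      rw [Finset.sum_comm]
      exact Finset.sum_congr rfl fun s _ => Finset.sum_congr rfl fun j hj => by
        rw [swap_out_in v hv s hj]; ring
    have e3 : ∑ s, ∑ j ∈ S, w (v s) * w j / (N : ℝ) ^ 2 *
        (if (fun r => Equiv.swap (v s) j (v r)) = u then 1 else 0) =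
        ∑ s, ∑ j ∈ S, w (v s) * w j / (N : ℝ) ^ 2 *
          (if Function.update v s j = u then (1:ℝ) else 0) :=
      Finset.sum_congr rfl fun s _ => Finset.sum_congr rfl fun j hj => by
        rw [swap_in_out v hv s hj]
    have e4 : ∑ s, ∑ r, w (v s) * w (v r) / (N : ℝ) ^ 2 *
        (if (fun q => Equiv.swap (v s) (v r) (v q)) = u then 1 else 0) =
        ∑ s, ∑ r, w (v s) * w (v r) / (N : ℝ) ^ 2 *
          (if v ∘ Equiv.swap s r = u then (1:ℝ) else 0) :=
      Finset.sum_congr rfl fun s _ => Finset.sum_congr rfl fun r hr => by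
        rw [swap_in_in v hv s r]
    rw [e1, e2, e3, e4]; ring
  have h2 : Qt k w v u = (if v = u then 1 - ∑ s, 2 * w (v s) / (N : ℝ) else 0)
      + 2 * (∑ s, ∑ j ∈ S, w (v s) * w j / (N : ℝ) ^ 2 * (if Function.update v s j = u then 1 else 0))
      + (if v = u then 2 * (∑ s, w (v s) ^ 2) / (N : ℝ) ^ 2 else 0) := by
    unfold Qt
    simp_rw [sum_split v hv (fun j => 2 * w _ * w j / (N : ℝ) ^ 2 * _)]
    rw [Finset.sum_add_distrib, Finset.mul_sum]
    have e1 : ∀ s, ∑ r, 2 * w (v s) * w (v r) / (N : ℝ) ^ 2 *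
        (if Function.update v s (v r) = u then (1:ℝ) else 0) =
        2 * w (v s) * w (v s) / (N : ℝ) ^ 2 * (if v = u then (1:ℝ) else 0) := by
      intro s
      rw [Finset.sum_eq_single s]
      · simp
      · intro r _ hrs
        rw [if_neg, mul_zero]
        intro h
        apply hrs
        apply hu
        rw [← h]; simp [Function.update_of_ne hrs]
      · simp
    simp_rw [e1, Finset.mul_sum]
    rw [add_assoc]
    congr 1
    congr 1
    · exact Finset.sum_congr rfl fun s _ => Finset.sum_congr rfl fun j hj => by ring
    · split_ifs
      · rw [Finset.sum_div]; exact Finset.sum_congr rfl fun s _ => by ring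
      · simp
  rw [h1, h2]
  have h3 : (∑ i ∈ S, ∑ j ∈ S, w i * w j / (N : ℝ) ^ 2 * (if v = u then 1 else 0)) =
      (if v = u then (N - ∑ s, w (v s)) ^ 2 / (N:ℝ)^2 else 0) := by
    rw [← hout]
    split_ifs
    · rw [sq (∑ i ∈ S, w i), Finset.sum_mul_sum, Finset.sum_div]
      exact Finset.sum_congr rfl fun s _ => by
        rw [Finset.sum_div]; simp
    · simp
  rw [h3]
  have h4 : ∑ s, 2 * w (v s) / (N : ℝ) = 2 * (∑ s, w (v s)) / N := by
    rw [← Finset.sum_div, Finset.mul_sum]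
  rw [h4]
  split_ifs
  · field_simp; ring
  · ring

/-- sum of coordinate swaps -/
def Zt (N k : ℕ) : Matrix (Fin k → Fin N) (Fin k → Fin N) ℝ :=
  fun v u => ∑ s, ∑ r, (if v ∘ Equiv.swap s r = u then 1 else 0)

lemma Pt_nonneg {N k : ℕ} (w : Fin N → ℝ) (hw0 : ∀ i, 0 ≤ w i) (v u : Fin k → Fin N) :
    0 ≤ Pt k w v u := by
  unfold Pt
  refine Finset.sum_nonneg fun i _ => Finset.sum_nonneg fun j _ => ?_
  have := hw0 i; have := hw0 j
  split_ifs <;> positivity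

lemma Qt_nonneg {N k : ℕ} (w : Fin N → ℝ) (a : ℝ) (hw0 : ∀ i, 0 ≤ w i) (hwa : ∀ i, w i ≤ a)
    (hN : 2 * a * k ≤ N) (hN0 : (0:ℝ) < N) (v u : Fin k → Fin N) : 0 ≤ Qt k w v u := by
  unfold Qt
  apply add_nonneg
  · split_ifs
    · have : ∑ s, 2 * w (v s) / (N : ℝ) ≤ ∑ s : Fin k, 2 * a / (N:ℝ) :=
        Finset.sum_le_sum fun s _ => by
          have := hwa (v s)
          gcongr
      simp only [Finset.sum_const, Finset.card_univ, Fintype.card_fin, nsmul_eq_mul] at this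
      have h2 : (k:ℝ) * (2 * a / N) ≤ 1 := by
        rw [← mul_div_assoc, div_le_one hN0]; linarith
      linarith
    · exact le_rfl
  · refine Finset.sum_nonneg fun i _ => Finset.sum_nonneg fun j _ => ?_
    have := hw0 (v i); have := hw0 j
    split_ifs <;> positivity

lemma Qt_le_Pt {N k : ℕ} (w : Fin N → ℝ) (hw0 : ∀ i, 0 ≤ w i)
    (hw : ∑ i, w i = N) (hN : (N : ℝ) ≠ 0)
    (v u : Fin k → Fin N) (hv : Function.Injective v) (hu : Function.Injective u) :
    Qt k w v u ≤ Pt k w v u := by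
  rw [Pt_eq w hw hN v u hv hu]
  have h1 : ∑ s, w (v s) ^ 2 / (N:ℝ)^2 * (if v = u then 1 else 0) ≤
      ∑ s, ∑ r, w (v s) * w (v r) / (N : ℝ) ^ 2 * (if v ∘ Equiv.swap s r = u then 1 else 0) := by
    refine Finset.sum_le_sum fun s _ => ?_
    have := Finset.single_le_sum (f := fun r => w (v s) * w (v r) / (N : ℝ) ^ 2 *
      (if v ∘ Equiv.swap s r = u then (1:ℝ) else 0)) (s := Finset.univ) (fun r _ => by
        have := hw0 (v s); have := hw0 (v r)
        split_ifs <;> positivity) (Finset.mem_univ s)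
    simpa [sq] using this
  have h2 : ∑ s, w (v s) ^ 2 ≤ (∑ s, w (v s)) ^ 2 :=
    Finset.sum_sq_le_sq_sum_of_nonneg fun i _ => hw0 _
  split_ifs at h1 ⊢
  · simp only [mul_one] at h1
    rw [← Finset.sum_div] at h1
    have h3 : 0 ≤ ((∑ s, w (v s)) ^ 2 - 2 * ∑ s, w (v s) ^ 2) / (N : ℝ) ^ 2
       + (∑ s, w (v s) ^ 2) / (N:ℝ)^2 := by
      rw [← add_div]
      apply div_nonneg _ (by positivity)
      linarith
    linarith
  · simp only [mul_zero, Finset.sum_const_zero] at h1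
    linarith

lemma Pt_le {N k : ℕ} (w : Fin N → ℝ) (a : ℝ) (hw0 : ∀ i, 0 ≤ w i) (hwa : ∀ i, w i ≤ a)
    (hw : ∑ i, w i = N) (hN : (N : ℝ) ≠ 0)
    (v u : Fin k → Fin N) (hv : Function.Injective v) (hu : Function.Injective u) :
    Pt k w v u ≤ (Qt k w + (((k:ℝ) + 1) * a ^ 2 / (N:ℝ) ^ 2) • Zt N k) v u := by
  rw [Pt_eq w hw hN v u hv hu, Matrix.add_apply, Matrix.smul_apply, smul_eq_mul, add_assoc]
  gcongr
  have hZ : (if v = u then (k:ℝ) else 0) ≤ Zt N k v u := by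
    unfold Zt
    calc (if v = u then (k:ℝ) else 0) = ∑ s : Fin k, (if v = u then (1:ℝ) else 0) := by
          split_ifs <;> simp
      _ ≤ _ := Finset.sum_le_sum fun s _ => by
          have := Finset.single_le_sum (f := fun r =>
            (if v ∘ Equiv.swap s r = u then (1:ℝ) else 0)) (s := Finset.univ) (fun r _ => by
                split_ifs <;> simp) (Finset.mem_univ s)
          simpa using this
  have h1 : ∑ s, ∑ r, w (v s) * w (v r) / (N : ℝ) ^ 2 * (if v ∘ Equiv.swap s r = u then 1 else 0)
      ≤ a ^ 2 / (N:ℝ) ^ 2 * Zt N k v u := by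
    unfold Zt
    rw [Finset.mul_sum]
    refine Finset.sum_le_sum fun s _ => ?_
    rw [Finset.mul_sum]
    refine Finset.sum_le_sum fun r _ => ?_
    have := hw0 (v s); have := hw0 (v r)
    have := hwa (v s); have := hwa (v r)
    rw [sq a]
    have : 0 ≤ a := le_trans (hw0 (v s)) (hwa _)
    gcongr
  have h2 : (if v = u then ((∑ s, w (v s)) ^ 2 - 2 * ∑ s, w (v s) ^ 2) / (N : ℝ) ^ 2 else 0)
      ≤ k * a ^ 2 / (N:ℝ)^2 * Zt N k v u := by
    refine le_trans ?_ (mul_le_mul_of_nonneg_left hZ (by positivity))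
    split_ifs
    · rw [div_mul_eq_mul_div]
      gcongr
      have h3 : ∑ s, w (v s) ≤ k * a := by
        calc _ ≤ ∑ s : Fin k, a := Finset.sum_le_sum fun s _ => hwa _
          _ = _ := by simp
      have h4 : 0 ≤ ∑ s, w (v s) := Finset.sum_nonneg fun s _ => hw0 _
      have h5 : 0 ≤ ∑ s, w (v s) ^ 2 := Finset.sum_nonneg fun s _ => sq_nonneg _
      nlinarith
    · simp
  calc _ ≤ k * a ^ 2 / (N:ℝ)^2 * Zt N k v u + a ^ 2 / (N:ℝ) ^ 2 * Zt N k v u := add_le_add h2 h1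
    _ = _ := by ring

lemma Zt_nonneg {N k : ℕ} (v u : Fin k → Fin N) : 0 ≤ Zt N k v u := by
  unfold Zt
  refine Finset.sum_nonneg fun i _ => Finset.sum_nonneg fun j _ => ?_
  split_ifs <;> simp

lemma matpow_nonneg {X : Type*} [Fintype X] [DecidableEq X] (M : Matrix X X ℝ)
    (hM : ∀ x y, 0 ≤ M x y) (t : ℕ) : ∀ x y, 0 ≤ (M ^ t) x y := by
  induction t with
  | zero => intro x y; rw [pow_zero, Matrix.one_apply]; split_ifs <;> simp
  | succ t ih =>
    intro x y
    rw [pow_succ, Matrix.mul_apply]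
    exact Finset.sum_nonneg fun z _ => mul_nonneg (ih _ _) (hM _ _)

lemma matpow_mono {X : Type*} [Fintype X] [DecidableEq X] (M K : Matrix X X ℝ)
    (hM : ∀ x y, 0 ≤ M x y) (h : ∀ x y, M x y ≤ K x y) (t : ℕ) :
    ∀ x y, (M ^ t) x y ≤ (K ^ t) x y := by
  induction t with
  | zero => intro x y; simp
  | succ t ih =>
    intro x y
    rw [pow_succ, pow_succ, Matrix.mul_apply, Matrix.mul_apply]
    exact Finset.sum_le_sum fun z _ => mul_le_mul (ih _ _) (h _ _) (hM _ _)
      ((matpow_nonneg M hM t _ _).trans (ih _ _))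

lemma Pt_inj {N k : ℕ} (w : Fin N → ℝ) (v u : Fin k → Fin N) (hv : Function.Injective v)
    (hu : ¬ Function.Injective u) : Pt k w v u = 0 := by
  unfold Pt
  refine Finset.sum_eq_zero fun i _ => Finset.sum_eq_zero fun j _ => ?_
  rw [if_neg, mul_zero]
  rintro rfl
  exact hu ((Equiv.swap i j).injective.comp hv)

/-- upper comparison -/
lemma Pt_pow_le {N k : ℕ} (w : Fin N → ℝ) (a : ℝ) (hw0 : ∀ i, 0 ≤ w i) (hwa : ∀ i, w i ≤ a)
    (hw : ∑ i, w i = N) (hN : 2 * a * k ≤ N) (hN0 : (0:ℝ) < N) (t : ℕ)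
    (u : Fin k → Fin N) :
    ∀ (v : Fin k → Fin N), Function.Injective v →
    (Pt k w ^ t) v u ≤ ((Qt k w + (((k:ℝ) + 1) * a ^ 2 / (N:ℝ) ^ 2) • Zt N k) ^ t) v u := by
  have hK : ∀ x y, 0 ≤ (Qt k w + (((k:ℝ) + 1) * a ^ 2 / (N:ℝ) ^ 2) • Zt N k) x y := by
    intro x y
    rw [Matrix.add_apply, Matrix.smul_apply, smul_eq_mul]
    have := Qt_nonneg w a hw0 hwa hN hN0 x y
    have := Zt_nonneg x y
    positivity
  induction t with
  | zero => intro v _; simp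
  | succ t ih =>
    intro v hv
    rw [pow_succ', pow_succ', Matrix.mul_apply, Matrix.mul_apply]
    refine Finset.sum_le_sum fun x _ => ?_
    by_cases hx : Function.Injective x
    · exact mul_le_mul (Pt_le w a hw0 hwa hw hN0.ne' v x hv hx) (ih x hx)
        (matpow_nonneg _ (Pt_nonneg w hw0) t _ _) (hK _ _)
    · rw [Pt_inj w v x hv hx, zero_mul]
      exact mul_nonneg (hK _ _) (matpow_nonneg _ hK _ _ _)

/-- restriction of a kernel -/
def Rs {X : Type*} (Y : X → Prop) [DecidablePred Y] (Q : Matrix X X ℝ) : Matrix X X ℝ :=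
  fun x y => if Y x ∧ Y y then Q x y else 0

lemma Rs_pow {X : Type*} [Fintype X] [DecidableEq X] (Y : X → Prop) [DecidablePred Y]
    (Q : Matrix X X ℝ) (j : ℕ) (x y : X) (hx : ¬ Y x) (hy : Y y) : (Rs Y Q ^ j) x y = 0 := by
  cases j with
  | zero => rw [pow_zero, Matrix.one_apply, if_neg]; rintro rfl; exact hx hy
  | succ j =>
    rw [pow_succ', Matrix.mul_apply]
    refine Finset.sum_eq_zero fun z _ => ?_
    simp [Rs, hx]

lemma Rs_trace {X : Type*} [Fintype X] [DecidableEq X] (Y : X → Prop) [DecidablePred Y]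
    (Q : Matrix X X ℝ) (hQ : ∀ x y, 0 ≤ Q x y) (t : ℕ) :
    (∑ x, if Y x then (Q ^ t) x x else 0) -
      t * ∑ x, ∑ y, (if ¬ Y x ∧ Y y then Q x y else 0) * (Q ^ (t-1)) y x ≤
    ∑ x, if Y x then (Rs Y Q ^ t) x x else 0 := by
  classical
  set R := Rs Y Q with hR
  set E : Matrix X X ℝ := fun x y => if ¬ Y x ∧ Y y then Q x y else 0 with hE
  let D : Matrix X X ℝ := Matrix.diagonal (fun x => if Y x then 1 else 0)
  have hR0 : ∀ x y, 0 ≤ R x y := by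
    intro x y; simp only [hR, Rs]; split_ifs; exact hQ _ _; exact le_rfl
  have hRQ : ∀ x y, R x y ≤ Q x y := by
    intro x y; simp only [hR, Rs]; split_ifs; exact le_rfl; exact hQ _ _
  have hE0 : ∀ x y, 0 ≤ E x y := by
    intro x y; simp only [hE]; split_ifs; exact hQ _ _; exact le_rfl
  have htr : ∀ M : Matrix X X ℝ, (M * D).trace = ∑ x, if Y x then M x x else 0 := by
    intro M
    simp [Matrix.trace, D, Matrix.mul_diagonal]
  have hB : ∑ x, ∑ y, (if ¬ Y x ∧ Y y then Q x y else 0) * (Q ^ (t-1)) y x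
      = (E * Q ^ (t-1)).trace := by
    simp only [Matrix.trace, Matrix.diag_apply, Matrix.mul_apply]; rfl
  rw [hB, ← htr, ← htr]
  have key : ∀ j, j ≤ t → (Q ^ t * D).trace - j * (E * Q ^ (t-1)).trace ≤
      (Q ^ (t - j) * R ^ j * D).trace := by
    intro j
    induction j with
    | zero => intro _; simp
    | succ j ih =>
      intro hj
      have h1 := ih (by omega)
      obtain ⟨m, hm⟩ : ∃ m, t = m + 1 + j := ⟨t - 1 - j, by omega⟩
      have e1 : t - j = m + 1 := by omega
      have e2 : t - (j+1) = m := by omega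
      have e3 : t - 1 = j + m := by omega
      rw [e1] at h1
      rw [e2]
      have h2 : ((Q - R) * R ^ j * D * Q ^ m).trace ≤ (E * Q ^ j * Q ^ m).trace := by
        have h3 : ∀ x y, ((Q - R) * R ^ j * D) x y ≤ (E * Q ^ j) x y := by
          intro x y
          rw [Matrix.mul_diagonal, Matrix.mul_apply, Matrix.mul_apply]
          by_cases hy : Y y
          · rw [if_pos hy, mul_one]
            refine Finset.sum_le_sum fun z _ => ?_
            by_cases hz : Y z
            · have : (Q - R) x z = E x z := by
                simp only [Matrix.sub_apply, hR, Rs, hE]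
                by_cases hx : Y x <;> simp [hx, hz]
              rw [this]
              exact mul_le_mul_of_nonneg_left (matpow_mono R Q hR0 hRQ j _ _) (hE0 _ _)
            · rw [Rs_pow Y Q j z y hz hy, mul_zero]
              exact mul_nonneg (hE0 _ _) (matpow_nonneg Q hQ _ _ _)
          · rw [if_neg hy, mul_zero]
            exact Finset.sum_nonneg fun z _ => mul_nonneg (hE0 _ _) (matpow_nonneg Q hQ _ _ _)
        unfold Matrix.trace
        refine Finset.sum_le_sum fun x _ => ?_
        rw [Matrix.diag_apply, Matrix.diag_apply, Matrix.mul_apply, Matrix.mul_apply]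
        exact Finset.sum_le_sum fun z _ => mul_le_mul_of_nonneg_right (h3 _ _)
          (matpow_nonneg Q hQ _ _ _)
      have h4 : (Q ^ (m+1) * R ^ j * D).trace - (Q ^ m * R ^ (j+1) * D).trace =
          ((Q - R) * R ^ j * D * Q ^ m).trace := by
        rw [← Matrix.trace_sub, Matrix.trace_mul_comm ((Q - R) * R ^ j * D)]
        congr 1
        rw [pow_succ Q, pow_succ' R]
        noncomm_ring
      rw [e3] at h1 ⊢
      rw [mul_assoc E, ← pow_add] at h2
      push_cast
      linarith
  have := key t le_rfl
  simpa using this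

/-- weights -/
def wt (a b : ℝ) {N : ℕ} (A : Finset (Fin N)) (x : Fin N) : ℝ := if x ∈ A then a else b

/-- one-particle spectral projections -/
def pj {n : ℕ} (A : Finset (Fin (2 * n))) (α : Fin 4) (x y : Fin (2 * n)) : ℝ :=
  match α with
  | 0 => 1 / (2 * n)
  | 1 => if x ∈ A ∧ y ∈ A then (if x = y then 1 else 0) - 1 / n else 0
  | 2 => if x ∉ A ∧ y ∉ A then (if x = y then 1 else 0) - 1 / n else 0
  | 3 => (if x ∈ A then 1 else -1) * (if y ∈ A then 1 else -1) / (2 * n)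

/-- eigenvalue constants -/
def th (a b : ℝ) (α : Fin 4) : ℝ :=
  match α with
  | 0 => 0
  | 1 => 2 * a
  | 2 => 2 * b
  | 3 => 2 * a * b

/-- ranks -/
def rk (n : ℕ) (α : Fin 4) : ℝ :=
  match α with
  | 0 => 1
  | 1 => n - 1
  | 2 => n - 1
  | 3 => 1

section
variable {n : ℕ} (A : Finset (Fin (2 * n)))

lemma sumA (f : Fin (2*n) → ℝ) (hA : A.card = n) (p q : ℝ) (hp : ∀ x ∈ A, f x = p)
    (hq : ∀ x, x ∉ A → f x = q) : ∑ x, f x = n * p + n * q := by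
  rw [← Finset.sum_add_sum_compl A, Finset.sum_congr rfl hp,
    Finset.sum_congr rfl (fun x hx => hq x (Finset.mem_compl.1 hx))]
  have : Aᶜ.card = n := by rw [Finset.card_compl, hA, Fintype.card_fin]; omega
  simp [hA, this]

lemma wt_sum (a b : ℝ) (hA : A.card = n) (hab : a + b = 2) :
    ∑ x, wt a b A x = ((2 * n : ℕ) : ℝ) := by
  rw [sumA A _ hA a b (by intro x hx; simp [wt, hx]) (by intro x hx; simp [wt, hx])]
  push_cast
  rw [← hab]; ring

lemma pj_wsum (a b : ℝ) (hA : A.card = n) (hn : 0 < n) (hab : a + b = 2) (α : Fin 4)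
    (y : Fin (2 * n)) :
    ∑ j, wt a b A j * pj A α j y =
      match α with
      | 0 => 1
      | 1 => 0
      | 2 => 0
      | 3 => (a - b) / 2 * (if y ∈ A then 1 else -1) := by
  have hn' : (n:ℝ) ≠ 0 := by positivity
  have hAc : Aᶜ.card = n := by rw [Finset.card_compl, hA, Fintype.card_fin]; omega
  fin_cases α
  · simp only [pj]
    rw [← Finset.sum_mul, wt_sum A a b hA hab]; push_cast; field_simp
  · simp only [pj]
    by_cases hy : y ∈ A
    · rw [← Finset.sum_add_sum_compl A, Finset.sum_eq_zero (s := Aᶜ)]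
      · have : ∀ x ∈ A, wt a b A x * (if x ∈ A ∧ y ∈ A then (if x = y then 1 else 0) - 1 / (n:ℝ) else 0)
          = a * (if x = y then 1 else 0) - a / n := by
          intro x hx; simp only [wt, hx, hy, if_true, and_self]; ring
        rw [Finset.sum_congr rfl this, Finset.sum_sub_distrib]
        simp [hy, hA]; field_simp; simp
      · intro x hx; simp [Finset.mem_compl.1 hx]
    · simp [hy]
  · simp only [pj]
    by_cases hy : y ∈ A
    · simp [hy]
    · rw [← Finset.sum_add_sum_compl A, Finset.sum_eq_zero (s := A)]
      · have : ∀ x ∈ Aᶜ, wt a b A x * (if x ∉ A ∧ y ∉ A then (if x = y then 1 else 0) - 1 / (n:ℝ) else 0)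
          = b * (if x = y then 1 else 0) - b / n := by
          intro x hx
          simp only [wt, Finset.mem_compl.1 hx, hy, if_true, not_false_eq_true, and_self, if_false]
          ring
        rw [Finset.sum_congr rfl this, Finset.sum_sub_distrib]
        simp [hy, hAc]; field_simp; simp
      · intro x hx; simp [hx]
  · simp only [pj]
    rw [sumA A _ hA (a * ((if y ∈ A then 1 else -1) / (2 * n)))
      (b * (-(if y ∈ A then 1 else -1) / (2 * n)))
      (by intro x hx; simp [wt, hx]) (by intro x hx; simp only [wt, hx, if_false]; ring)]
    field_simp
    ring

lemma pj_eig (a b : ℝ) (hA : A.card = n) (hn : 0 < n) (hab : a + b = 2) (α : Fin 4)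
    (x y : Fin (2 * n)) :
    ∑ j, 2 * wt a b A x * wt a b A j / ((2 * n : ℕ) : ℝ) ^ 2 * pj A α j y =
      (2 * wt a b A x / ((2 * n : ℕ) : ℝ) - th a b α / ((2 * n : ℕ) : ℝ)) * pj A α x y := by
  have h : ∑ j, 2 * wt a b A x * wt a b A j / ((2 * n : ℕ) : ℝ) ^ 2 * pj A α j y =
     2 * wt a b A x / ((2 * n : ℕ) : ℝ) ^ 2 * ∑ j, wt a b A j * pj A α j y := by
    rw [Finset.mul_sum]; exact Finset.sum_congr rfl fun j _ => by ring
  have hn' : (n:ℝ) ≠ 0 := by positivity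
  have hb : b = 2 - a := by linarith
  rw [h, pj_wsum A a b hA hn hab]
  fin_cases α
  · simp only [pj, th]; push_cast; field_simp; ring
  · simp only [pj, th]
    by_cases hx : x ∈ A <;> simp [wt, hx]
  · simp only [pj, th]
    by_cases hx : x ∈ A <;> simp [wt, hx]
  · simp only [pj, th]
    subst hb
    by_cases hx : x ∈ A <;> simp only [wt, hx, if_true, if_false] <;> push_cast <;>
      field_simp <;> ring

lemma pj_sum (hn : 0 < n) (x y : Fin (2 * n)) :
    ∑ α, pj A α x y = if x = y then 1 else 0 := by
  have hn' : (n:ℝ) ≠ 0 := by positivity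
  simp only [Fin.sum_univ_four, pj]
  by_cases h : x = y
  · subst h
    by_cases hx : x ∈ A <;> simp [hx] <;> field_simp <;> ring
  · by_cases hx : x ∈ A <;> by_cases hy : y ∈ A <;> simp [hx, hy, h] <;> field_simp <;> ring

lemma pj_abs (hn : 2 ≤ n) (α : Fin 4) (x y : Fin (2 * n)) : |pj A α x y| ≤ rk n α / n := by
  have hn' : (2:ℝ) ≤ n := by exact_mod_cast hn
  have hn0 : (0:ℝ) < n := by linarith
  have h0 : 0 ≤ ((n:ℝ) - 1) / n := div_nonneg (by linarith) (by linarith)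
  have h12 : (1:ℝ) / (2 * n) ≤ 1 / n := by
    apply one_div_le_one_div_of_le hn0; linarith
  have hd : |(if x = y then (1:ℝ) else 0) - 1 / n| ≤ ((n:ℝ) - 1) / n := by
    have : ((n:ℝ) - 1) / n = 1 - 1 / n := by field_simp
    rw [this]
    have h3 : (1:ℝ) / n ≤ 1 / 2 := one_div_le_one_div_of_le (by norm_num) hn'
    have h4 : (0:ℝ) < 1 / n := by positivity
    split_ifs
    · rw [abs_of_nonneg (by linarith)]
    · rw [abs_le]; constructor <;> linarith
  fin_cases α
  · simp only [pj, rk]; rw [abs_of_nonneg (by positivity)]; exact h12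
  · simp only [pj, rk]; split_ifs at * <;> simp_all
  · simp only [pj, rk]; split_ifs at * <;> simp_all
  · simp only [pj, rk]
    rw [abs_div, abs_mul, abs_of_pos (by positivity : (0:ℝ) < 2 * n)]
    split_ifs <;> simpa using h12

lemma pj_diag_nonneg (hn : 2 ≤ n) (α : Fin 4) (x : Fin (2 * n)) : 0 ≤ pj A α x x := by
  have hn' : (2:ℝ) ≤ n := by exact_mod_cast hn
  have h3 : (1:ℝ) / n ≤ 1 / 2 := one_div_le_one_div_of_le (by norm_num) hn'
  fin_cases α
  · simp only [pj]; positivity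
  · simp only [pj, if_true]; split_ifs <;> linarith
  · simp only [pj, if_true]; split_ifs <;> linarith
  · simp only [pj]; split_ifs <;> norm_num

lemma pj_psd (hn : 2 ≤ n) (α : Fin 4) (x y : Fin (2 * n)) :
    pj A α x y ^ 2 ≤ pj A α x x * pj A α y y := by
  have hn' : (2:ℝ) ≤ n := by exact_mod_cast hn
  have h3 : (1:ℝ) / n ≤ 1 / 2 := one_div_le_one_div_of_le (by norm_num) hn'
  have h4 : (0:ℝ) < 1 / n := by positivity
  have hd : ((if x = y then (1:ℝ) else 0) - 1 / n) ^ 2 ≤ (1 - 1 / n) * (1 - 1 / n) := by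
    split_ifs <;> nlinarith
  fin_cases α
  · simp only [pj]; rw [sq]
  · simp only [pj, if_true, and_self]
    by_cases hx : x ∈ A <;> by_cases hy : y ∈ A <;> simp only [hx, hy, if_true, if_false, and_self, and_true, and_false, true_and, false_and] <;> first | exact hd | norm_num
  · simp only [pj, if_true, and_self]
    by_cases hx : x ∈ A <;> by_cases hy : y ∈ A <;> simp only [hx, hy, if_true, if_false, and_self, and_true, and_false, true_and, false_and, not_true_eq_false, not_false_eq_true] <;> first | exact hd | norm_num
  · simp only [pj]; rw [sq]; split_ifs <;> (apply le_of_eq; ring)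

lemma pj_trace (hA : A.card = n) (hn : 0 < n) (α : Fin 4) : ∑ x, pj A α x x = rk n α := by
  have hn' : (n:ℝ) ≠ 0 := by positivity
  fin_cases α
  · simp [pj, rk]; field_simp
  · rw [sumA A _ hA (1 - 1/n) 0 (by intro x hx; simp [pj, hx]) (by intro x hx; simp [pj, hx])]
    simp only [rk]; field_simp; simp
  · rw [sumA A _ hA 0 (1 - 1/n) (by intro x hx; simp [pj, hx]) (by intro x hx; simp [pj, hx])]
    simp only [rk]; field_simp; simp
  · rw [sumA A _ hA (1/(2*n)) (1/(2*n)) (by intro x hx; simp [pj, hx]) (by intro x hx; simp [pj, hx])]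
    simp only [rk]; field_simp; norm_num

end

section
variable {n k : ℕ} (A : Finset (Fin (2 * n)))

/-- tensor products of spectral projections, with a coordinate permutation -/
def Tp (α : Fin k → Fin 4) (π : Equiv.Perm (Fin k)) :
    Matrix (Fin k → Fin (2 * n)) (Fin k → Fin (2 * n)) ℝ :=
  fun v u => ∏ s, pj A (α s) (v s) (u (π s))

/-- eigenvalue of the product kernel -/
def lam (a b : ℝ) (n : ℕ) (α : Fin k → Fin 4) : ℝ :=
  1 - ∑ s, th a b (α s) / ((2 * n : ℕ) : ℝ)

lemma Tp_sum (hn : 0 < n) : ∑ α : Fin k → Fin 4, Tp A α 1 = 1 := by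
  ext v u
  rw [Matrix.sum_apply]
  simp only [Tp, Equiv.Perm.coe_one, id_eq]
  have := Finset.prod_univ_sum (fun _ : Fin k => (Finset.univ : Finset (Fin 4)))
    (fun s α => pj A α (v s) (u s))
  rw [Fintype.piFinset_univ] at this
  rw [← this]
  simp_rw [pj_sum A hn]
  rw [Matrix.one_apply, Fintype.prod_ite_zero]
  simp [funext_iff]

lemma Qt_mul_Tp (a b : ℝ) (hA : A.card = n) (hn : 0 < n) (hab : a + b = 2)
    (α : Fin k → Fin 4) (π : Equiv.Perm (Fin k)) :
    Qt k (wt a b A) * Tp A α π = lam a b n α • Tp A α π := by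
  ext v u
  rw [Matrix.mul_apply, Matrix.smul_apply, smul_eq_mul]
  unfold Qt
  simp_rw [add_mul, ite_mul, zero_mul, Finset.sum_add_distrib]
  rw [Finset.sum_ite_eq Finset.univ v]
  simp only [Finset.mem_univ, if_true]
  have h1 : ∑ x, (∑ s, ∑ j, 2 * wt a b A (v s) * wt a b A j / ((2 * n : ℕ) : ℝ) ^ 2 *
      (if Function.update v s j = x then 1 else 0)) * Tp A α π x u =
      ∑ s, ∑ j, 2 * wt a b A (v s) * wt a b A j / ((2 * n : ℕ) : ℝ) ^ 2 *
        Tp A α π (Function.update v s j) u := by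
    simp_rw [Finset.sum_mul]
    rw [Finset.sum_comm]
    refine Finset.sum_congr rfl fun s _ => ?_
    rw [Finset.sum_comm]
    refine Finset.sum_congr rfl fun j _ => ?_
    rw [Finset.sum_eq_single (Function.update v s j)]
    · simp
    · intro x _ hx; rw [if_neg (Ne.symm hx)]; simp
    · simp
  rw [h1]
  have h2 : ∀ s, ∑ j, 2 * wt a b A (v s) * wt a b A j / ((2 * n : ℕ) : ℝ) ^ 2 *
        Tp A α π (Function.update v s j) u =
      (2 * wt a b A (v s) / ((2 * n : ℕ) : ℝ) - th a b (α s) / ((2 * n : ℕ) : ℝ)) *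
        Tp A α π v u := by
    intro s
    have h3 : ∀ j, Tp A α π (Function.update v s j) u =
        pj A (α s) j (u (π s)) * ∏ r ∈ Finset.univ.erase s, pj A (α r) (v r) (u (π r)) := by
      intro j
      unfold Tp
      rw [← Finset.mul_prod_erase _ _ (Finset.mem_univ s)]
      simp only [Function.update_self]
      congr 1
      refine Finset.prod_congr rfl fun r hr => ?_
      rw [Function.update_of_ne (Finset.ne_of_mem_erase hr)]
    have h4 := h3 (v s)
    rw [Function.update_eq_self] at h4
    simp_rw [h3, ← mul_assoc]
    rw [← Finset.sum_mul, pj_eig A a b hA hn hab, h4]; ring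
  simp_rw [h2]
  rw [← Finset.sum_mul, Finset.sum_sub_distrib]
  unfold lam
  ring

lemma Zt_mul_Tp (α : Fin k → Fin 4) (π : Equiv.Perm (Fin k)) :
    Zt (2 * n) k * Tp A α π =
      ∑ s, ∑ r, Tp A (α ∘ Equiv.swap s r) (π * Equiv.swap s r) := by
  ext v u
  rw [Matrix.mul_apply]
  simp only [Matrix.sum_apply]
  unfold Zt
  simp_rw [Finset.sum_mul]
  rw [Finset.sum_comm]
  refine Finset.sum_congr rfl fun s _ => ?_
  rw [Finset.sum_comm]
  refine Finset.sum_congr rfl fun r _ => ?_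
  simp_rw [ite_mul, one_mul, zero_mul]
  rw [Finset.sum_ite_eq Finset.univ]
  simp only [Finset.mem_univ, if_true, Tp]
  rw [← Equiv.prod_comp (Equiv.swap s r)]
  simp

lemma Qt_pow_mul (a b : ℝ) (hA : A.card = n) (hn : 0 < n) (hab : a + b = 2)
    (α : Fin k → Fin 4) (π : Equiv.Perm (Fin k)) (t : ℕ) :
    Qt k (wt a b A) ^ t * Tp A α π = lam a b n α ^ t • Tp A α π := by
  induction t with
  | zero => simp
  | succ t ih =>
    rw [pow_succ, Matrix.mul_assoc, Qt_mul_Tp A a b hA hn hab, Matrix.mul_smul, ih, smul_smul,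
      pow_succ']

lemma Qt_pow (a b : ℝ) (hA : A.card = n) (hn : 0 < n) (hab : a + b = 2) (t : ℕ) :
    Qt k (wt a b A) ^ t = ∑ α, lam a b n α ^ t • Tp A α 1 := by
  rw [← Matrix.mul_one (Qt k (wt a b A) ^ t), ← Tp_sum A hn, Matrix.mul_sum]
  exact Finset.sum_congr rfl fun α _ => Qt_pow_mul A a b hA hn hab α 1 t

lemma Tp_trace (hA : A.card = n) (hn : 0 < n) (α : Fin k → Fin 4) :
    (Tp A α 1).trace = ∏ s, rk n (α s) := by
  simp_rw [← pj_trace A hA hn]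
  have := Finset.prod_univ_sum (fun _ : Fin k => (Finset.univ : Finset (Fin (2*n))))
    (fun s x => pj A (α s) x x)
  rw [Fintype.piFinset_univ] at this
  rw [this]
  rfl

lemma Tp_trace_le (hA : A.card = n) (hn : 2 ≤ n) (α : Fin k → Fin 4) (π : Equiv.Perm (Fin k)) :
    (Tp A α π).trace ≤ ∏ s, rk n (α s) := by
  rw [← Tp_trace A hA (by omega)]
  have h0 : ∀ v, 0 ≤ Tp A α 1 v v := fun v => Finset.prod_nonneg fun s _ => pj_diag_nonneg A hn _ _
  have h1 : ∀ v u, Tp A α 1 v u ≤ (Tp A α 1 v v + Tp A α 1 u u) / 2 := by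
    intro v u
    have h2 : Tp A α 1 v u ^ 2 ≤ Tp A α 1 v v * Tp A α 1 u u := by
      unfold Tp
      rw [← Finset.prod_pow, ← Finset.prod_mul_distrib]
      exact Finset.prod_le_prod (fun s _ => sq_nonneg _) fun s _ => pj_psd A hn _ _ _
    have := h0 v; have := h0 u
    refine (le_abs_self _).trans (abs_le_of_sq_le_sq ?_ (by linarith))
    nlinarith [sq_nonneg (Tp A α 1 v v - Tp A α 1 u u)]
  have h3 : ∀ v, Tp A α π v v = Tp A α 1 v (v ∘ π) := fun v => rfl
  unfold Matrix.trace
  simp only [Matrix.diag_apply]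
  have h4 : ∑ v : Fin k → Fin (2 * n), Tp A α 1 (v ∘ π) (v ∘ π) = ∑ v, Tp A α 1 v v :=
    Equiv.sum_comp (Equiv.arrowCongr π.symm (Equiv.refl (Fin (2 * n)))) (fun v => Tp A α 1 v v)
  calc _ ≤ ∑ v, (Tp A α 1 v v + Tp A α 1 (v ∘ π) (v ∘ π)) / 2 :=
        Finset.sum_le_sum fun v _ => by rw [h3]; exact h1 _ _
    _ = _ := by
        rw [← Finset.sum_div, Finset.sum_add_distrib, h4]; ring

lemma lam_swap (a b : ℝ) (α : Fin k → Fin 4) (τ : Equiv.Perm (Fin k)) :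
    lam a b n (α ∘ τ) = lam a b n α := by
  unfold lam
  congr 1
  exact Equiv.sum_comp τ (fun s => th a b (α s) / ((2 * n : ℕ) : ℝ))

lemma K_trace (a b ε : ℝ) (hε : 0 ≤ ε) (hA : A.card = n) (hn : 2 ≤ n) (hab : a + b = 2)
    (hl : ∀ α : Fin k → Fin 4, 0 ≤ lam a b n α) (t : ℕ) :
    ∀ (α : Fin k → Fin 4) (π : Equiv.Perm (Fin k)),
    ((Qt k (wt a b A) + ε • Zt (2 * n) k) ^ t * Tp A α π).trace ≤
      (lam a b n α + ε * k ^ 2) ^ t * ∏ s, rk n (α s) := by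
  induction t with
  | zero => intro α π; simpa using Tp_trace_le A hA hn α π
  | succ t ih =>
    intro α π
    rw [pow_succ, Matrix.mul_assoc, add_mul, Qt_mul_Tp A a b hA (by omega) hab, Matrix.smul_mul,
      Zt_mul_Tp, mul_add, Matrix.trace_add, Matrix.mul_smul, Matrix.mul_smul, Matrix.trace_smul,
      Matrix.trace_smul]
    simp only [Matrix.mul_sum, Matrix.trace_sum, smul_eq_mul]
    have h1 : ∀ s r : Fin k, ((Qt k (wt a b A) + ε • Zt (2 * n) k) ^ t *
        Tp A (α ∘ Equiv.swap s r) (π * Equiv.swap s r)).trace ≤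
        (lam a b n α + ε * k ^ 2) ^ t * ∏ s, rk n (α s) := by
      intro s r
      have := ih (α ∘ Equiv.swap s r) (π * Equiv.swap s r)
      rw [lam_swap] at this
      refine this.trans (le_of_eq ?_)
      congr 1
      exact Equiv.prod_comp (Equiv.swap s r) (fun s => rk n (α s))
    have h2 : ∑ s : Fin k, ∑ r : Fin k, ((Qt k (wt a b A) + ε • Zt (2 * n) k) ^ t *
        Tp A (α ∘ Equiv.swap s r) (π * Equiv.swap s r)).trace ≤
        k ^ 2 * ((lam a b n α + ε * k ^ 2) ^ t * ∏ s, rk n (α s)) := by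
      calc _ ≤ ∑ s : Fin k, ∑ r : Fin k, ((lam a b n α + ε * k ^ 2) ^ t * ∏ s, rk n (α s)) :=
            Finset.sum_le_sum fun s _ => Finset.sum_le_sum fun r _ => h1 s r
        _ = _ := by simp; ring
    calc _ ≤ lam a b n α * ((lam a b n α + ε * k ^ 2) ^ t * ∏ s, rk n (α s)) +
          ε * (k ^ 2 * ((lam a b n α + ε * k ^ 2) ^ t * ∏ s, rk n (α s))) :=
          add_le_add (mul_le_mul_of_nonneg_left (ih α π) (hl α)) (mul_le_mul_of_nonneg_left h2 hε)
      _ = _ := by rw [pow_succ]; ring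

lemma K_trace_le (a b ε : ℝ) (hε : 0 ≤ ε) (hA : A.card = n) (hn : 2 ≤ n) (hab : a + b = 2)
    (hl : ∀ α : Fin k → Fin 4, 0 ≤ lam a b n α) (t : ℕ) :
    ((Qt k (wt a b A) + ε • Zt (2 * n) k) ^ t).trace ≤
      ∑ α : Fin k → Fin 4, (lam a b n α + ε * k ^ 2) ^ t * ∏ s, rk n (α s) := by
  rw [← Matrix.mul_one ((Qt k (wt a b A) + ε • Zt (2 * n) k) ^ t), ← Tp_sum A (by omega),
    Matrix.mul_sum, Matrix.trace_sum]
  exact Finset.sum_le_sum fun α _ => K_trace A a b ε hε hA hn hab hl t α 1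

lemma Qt_pow_trace (a b : ℝ) (hA : A.card = n) (hn : 0 < n) (hab : a + b = 2) (t : ℕ) :
    (Qt k (wt a b A) ^ t).trace = ∑ α, lam a b n α ^ t * ∏ s : Fin k, rk n (α s) := by
  rw [Qt_pow A a b hA hn hab, Matrix.trace_sum]
  refine Finset.sum_congr rfl fun α _ => ?_
  rw [Matrix.trace_smul, Tp_trace A hA hn, smul_eq_mul]

lemma Qt_pow_entry (a b : ℝ) (hA : A.card = n) (hn : 2 ≤ n) (hab : a + b = 2)
    (hl : ∀ α : Fin k → Fin 4, 0 ≤ lam a b n α) (t : ℕ) (v u : Fin k → Fin (2 * n)) :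
    (Qt k (wt a b A) ^ t) v u ≤ (∑ α, lam a b n α ^ t * ∏ s : Fin k, rk n (α s)) / n ^ k := by
  rw [Qt_pow A a b hA (by omega) hab, Matrix.sum_apply, Finset.sum_div]
  refine Finset.sum_le_sum fun α _ => ?_
  rw [Matrix.smul_apply, smul_eq_mul, mul_div_assoc]
  refine mul_le_mul_of_nonneg_left ?_ (pow_nonneg (hl α) t)
  calc Tp A α 1 v u ≤ |Tp A α 1 v u| := le_abs_self _
    _ = ∏ s, |pj A (α s) (v s) (u s)| := by unfold Tp; rw [Finset.abs_prod]; rfl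
    _ ≤ ∏ s, (rk n (α s) / n) := Finset.prod_le_prod (fun _ _ => abs_nonneg _)
        fun s _ => pj_abs A hn _ _ _
    _ = _ := by rw [Finset.prod_div_distrib]; simp

end

lemma swap_eq_swap {N : ℕ} {i j i0 j0 : Fin N} (h0 : i0 ≠ j0)
    (h : Equiv.swap i j = Equiv.swap i0 j0) : (i = i0 ∧ j = j0) ∨ (i = j0 ∧ j = i0) := by
  have h1 : Equiv.swap i j i0 = j0 := by rw [h]; simp
  rw [Equiv.swap_apply_def] at h1
  split_ifs at h1 with h2 h3
  · exact Or.inl ⟨h2.symm, h1⟩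
  · exact Or.inr ⟨h1, h3.symm⟩
  · exact absurd h1 h0

lemma sum_swap {N : ℕ} {i0 j0 : Fin N} (h0 : i0 ≠ j0) (f : Fin N → Fin N → ℝ) :
    ∑ i, ∑ j, f i j * (if Equiv.swap i j = Equiv.swap i0 j0 then 1 else 0) = f i0 j0 + f j0 i0 := by
  have h : ∀ i j, f i j * (if Equiv.swap i j = Equiv.swap i0 j0 then 1 else 0) =
      (if i = i0 then (if j = j0 then f i j else 0) else 0) +
      (if i = j0 then (if j = i0 then f i j else 0) else 0) := by
    intro i j
    by_cases h : Equiv.swap i j = Equiv.swap i0 j0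
    · rcases swap_eq_swap h0 h with ⟨rfl, rfl⟩ | ⟨rfl, rfl⟩
      · simp [h0]
      · simp [h0, h]
    · have h1 : ¬ (i = i0 ∧ j = j0) := by rintro ⟨rfl, rfl⟩; exact h rfl
      have h2 : ¬ (i = j0 ∧ j = i0) := by rintro ⟨rfl, rfl⟩; exact h (Equiv.swap_comm _ _)
      rw [if_neg h, ← ite_and, ← ite_and, if_neg h1, if_neg h2]; simp
  simp_rw [h, Finset.sum_add_distrib]
  simp

lemma transMat_eq (a b : ℝ) {N : ℕ} (A : Finset (Fin N)) (x y : Equiv.Perm (Fin N)) :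
    transMat a b A x y = ∑ i, ∑ j, wt a b A i * wt a b A j / (N : ℝ) ^ 2 *
      (if Equiv.swap i j = y * x⁻¹ then 1 else 0) := by
  unfold transMat
  by_cases hxy : y = x
  · rw [if_pos hxy]
    subst hxy
    have : ∀ i j, wt a b A i * wt a b A j / (N : ℝ) ^ 2 *
      (if Equiv.swap i j = y * y⁻¹ then 1 else 0) =
      if i = j then wt a b A i * wt a b A j / (N : ℝ) ^ 2 else 0 := by
      intro i j
      rw [mul_inv_cancel, Equiv.Perm.one_def]
      simp only [Equiv.swap_eq_refl_iff]
      split_ifs <;> simp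
    simp_rw [this]
    simp only [Finset.sum_ite_eq, Finset.mem_univ, if_true]
    rw [← Finset.sum_add_sum_compl A, add_div]
    congr 1
    · rw [Finset.sum_congr rfl (g := fun _ => a * a / (N:ℝ)^2) (fun x hx => by simp [wt, hx])]
      simp; ring
    · rw [Finset.sum_congr rfl (g := fun _ => b * b / (N:ℝ)^2)
        (fun x hx => by simp [wt, Finset.mem_compl.1 hx])]
      simp only [Finset.sum_const, nsmul_eq_mul]; ring
  · rw [if_neg hxy]
    split_ifs with h1 h2 h3
    · obtain ⟨i, j, hij, hi, hj, h⟩ := h1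
      rw [h, sum_swap hij]; simp only [wt, hi, hj, if_true]; ring
    · obtain ⟨i, j, hij, hi, hj, h⟩ := h2
      rw [h, sum_swap hij]; simp only [wt, hi, hj, if_false]; ring
    · obtain ⟨i, j, hi, hj, h⟩ := h3
      have hij : i ≠ j := by rintro rfl; exact hj hi
      rw [h, sum_swap hij]; simp only [wt, hi, hj, if_true, if_false]; ring
    · symm
      refine Finset.sum_eq_zero fun i _ => Finset.sum_eq_zero fun j _ => ?_
      rw [if_neg, mul_zero]
      intro h
      have hij : i ≠ j := by
        rintro rfl
        rw [Equiv.swap_self] at h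
        apply hxy
        have : y * x⁻¹ = 1 := h.symm
        exact mul_inv_eq_one.1 this
      by_cases hi : i ∈ A <;> by_cases hj : j ∈ A
      · exact h1 ⟨i, j, hij, hi, hj, h.symm⟩
      · exact h3 ⟨i, j, hi, hj, h.symm⟩
      · exact h3 ⟨j, i, hj, hi, by rw [← h, Equiv.swap_comm]⟩
      · exact h2 ⟨i, j, hij, hi, hj, h.symm⟩

lemma transMat_step (a b : ℝ) {N k : ℕ} (A : Finset (Fin N)) (x : Equiv.Perm (Fin N))
    (v u : Fin k → Fin N) :
    ∑ y, transMat a b A x y * (if y ∘ v = u then 1 else 0) = Pt k (wt a b A) (x ∘ v) u := by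
  simp_rw [transMat_eq, Finset.sum_mul]
  unfold Pt
  rw [Finset.sum_comm]
  refine Finset.sum_congr rfl fun i _ => ?_
  rw [Finset.sum_comm]
  refine Finset.sum_congr rfl fun j _ => ?_
  rw [Finset.sum_eq_single (Equiv.swap i j * x)]
  · rw [mul_inv_cancel_right, if_pos rfl, mul_one]; rfl
  · intro y _ hy
    rw [if_neg]
    · simp
    · intro h; apply hy; rw [h]; simp
  · simp

lemma transMat_pow (a b : ℝ) {N k : ℕ} (A : Finset (Fin N)) (v u : Fin k → Fin N) (t : ℕ) :
    ∑ y, (transMat a b A ^ t) 1 y * (if y ∘ v = u then 1 else 0) =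
      (Pt k (wt a b A) ^ t) v u := by
  induction t generalizing u with
  | zero =>
    simp only [pow_zero, Matrix.one_apply]
    rw [Finset.sum_eq_single 1]
    · simp
    · intro y _ hy; rw [if_neg (Ne.symm hy)]; simp
    · simp
  | succ t ih =>
    rw [pow_succ, pow_succ, Matrix.mul_apply]
    simp_rw [Matrix.mul_apply, Finset.sum_mul, ← ih]
    simp_rw [Finset.sum_mul]
    rw [Finset.sum_comm, Finset.sum_comm (s := (Finset.univ : Finset (Fin k → Fin N)))]
    refine Finset.sum_congr rfl fun x _ => ?_
    simp_rw [mul_assoc, ← Finset.mul_sum]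
    rw [transMat_step]
    congr 1
    simp

/-- number of fixed points -/
def fx {N : ℕ} (y : Equiv.Perm (Fin N)) : ℕ := Fintype.card {x // y x = x}

lemma fx_desc {N : ℕ} (k : ℕ) (y : Equiv.Perm (Fin N)) :
    ((fx y).descFactorial k : ℝ) =
      ∑ v : Fin k → Fin N, if Function.Injective v then (if y ∘ v = v then 1 else 0) else 0 := by
  classical
  have h : (fx y).descFactorial k =
      Fintype.card {v : Fin k → Fin N // Function.Injective v ∧ y ∘ v = v} := by
    have := Fintype.card_embedding_eq (α := Fin k) (β := {x // y x = x})
    rw [Fintype.card_fin] at this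
    unfold fx
    rw [← this]
    refine Fintype.card_congr ⟨fun e => ⟨fun s => (e s).1, ?_, ?_⟩,
      fun v => ⟨fun s => ⟨v.1 s, congrFun v.2.2 s⟩, ?_⟩, ?_, ?_⟩
    · intro s r h; exact e.injective (Subtype.ext h)
    · funext s; exact (e s).2
    · intro s r h; exact v.2.1 (congrArg Subtype.val h)
    · intro e; rfl
    · intro v; rfl
  rw [h, Fintype.card_subtype]
  simp_rw [← ite_and]
  rw [Finset.sum_boole]

lemma moment_eq (a b : ℝ) {N k : ℕ} (A : Finset (Fin N)) (t : ℕ) :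
    ∑ y, (transMat a b A ^ t) 1 y * ((fx y).descFactorial k : ℝ) =
      ∑ v : Fin k → Fin N, if Function.Injective v then (Pt k (wt a b A) ^ t) v v else 0 := by
  simp_rw [fx_desc, Finset.mul_sum]
  rw [Finset.sum_comm]
  refine Finset.sum_congr rfl fun v _ => ?_
  split_ifs with h
  · exact transMat_pow a b A v v t
  · simp

lemma card_noninj (N k : ℕ) (hN : 0 < N) (hk : k ≤ N) :
    (∑ v : Fin k → Fin N, if Function.Injective v then (0:ℝ) else 1) ≤ k ^ 2 / N * N ^ k := by
  have h1 : (∑ v : Fin k → Fin N, if Function.Injective v then (1:ℝ) else 0) =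
      (N.descFactorial k : ℝ) := by
    have := fx_desc k (1 : Equiv.Perm (Fin N))
    simp only [Equiv.Perm.coe_one, Function.id_comp, if_true] at this
    rw [← this]
    simp [fx]
  have h2 : (∑ v : Fin k → Fin N, if Function.Injective v then (1:ℝ) else 0) +
      (∑ v : Fin k → Fin N, if Function.Injective v then (0:ℝ) else 1) = N ^ k := by
    rw [← Finset.sum_add_distrib]
    rw [Finset.sum_congr rfl (g := fun _ => (1:ℝ)) (fun v _ => by split_ifs <;> simp)]
    simp
  have hN' : (0:ℝ) < N := by exact_mod_cast hN
  have h3 : (1 - k ^ 2 / N : ℝ) * N ^ k ≤ (N.descFactorial k : ℝ) := by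
    have h4 : (((N + 1 - k) ^ k : ℕ) : ℝ) ≤ (N.descFactorial k : ℝ) := by
      exact_mod_cast N.pow_sub_le_descFactorial k
    refine le_trans ?_ h4
    rw [Nat.cast_pow, Nat.cast_sub (by omega)]
    have hkN : (k:ℝ) ≤ N := by exact_mod_cast hk
    have h5 : ((N + 1 : ℕ) : ℝ) - k = (1 + (1 - (k:ℝ)) / N) * N := by
      push_cast; field_simp; ring
    rw [h5, mul_pow]
    have h6 : (-2:ℝ) ≤ (1 - (k:ℝ)) / N := by
      rw [le_div_iff₀ hN']; linarith
    have h7 := one_add_mul_le_pow h6 k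
    have h8 : (1 - k ^ 2 / N : ℝ) ≤ 1 + k * ((1 - (k:ℝ)) / N) := by
      have : (1:ℝ) + k * ((1 - (k:ℝ)) / N) - (1 - k ^ 2 / N) = k / N := by field_simp; ring
      have : (0:ℝ) ≤ k / N := by positivity
      linarith
    exact mul_le_mul_of_nonneg_right (h8.trans h7) (by positivity)
  linarith [h1 ▸ h2]

/-- trace sum -/
def Gs (a b : ℝ) (k n t : ℕ) (ε : ℝ) : ℝ :=
  ∑ α : Fin k → Fin 4, (lam a b n α + ε) ^ t * ∏ s, rk n (α s)

lemma rk_nonneg (n : ℕ) (hn : 1 ≤ n) (α : Fin 4) : 0 ≤ rk n α := by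
  have : (1:ℝ) ≤ n := by exact_mod_cast hn
  fin_cases α <;> simp only [rk] <;> linarith

section
variable {n : ℕ} (A : Finset (Fin (2 * n)))

lemma mom_upper (a b : ℝ) (hb : 0 < b) (hba : b < a) (hab : a + b = 2) (k : ℕ)
    (hA : A.card = n) (hn : 2 ≤ n) (hN : 2 * a * k ≤ ((2 * n : ℕ) : ℝ))
    (hl : ∀ α : Fin k → Fin 4, 0 ≤ lam a b n α) (t : ℕ) :
    (∑ v : Fin k → Fin (2 * n), if Function.Injective v then (Pt k (wt a b A) ^ t) v v else 0) ≤
      Gs a b k n t (((k:ℝ) + 1) * a ^ 2 / ((2 * n : ℕ) : ℝ) ^ 2 * k ^ 2) := by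
  have hw0 : ∀ i, 0 ≤ wt a b A i := by intro i; unfold wt; split_ifs <;> linarith
  have hwa : ∀ i, wt a b A i ≤ a := by intro i; unfold wt; split_ifs <;> linarith
  have hN0 : (0:ℝ) < ((2 * n : ℕ) : ℝ) := by have : 0 < 2 * n := by omega
                                             exact_mod_cast this
  refine le_trans ?_ (K_trace_le A a b (((k:ℝ) + 1) * a ^ 2 / ((2 * n : ℕ) : ℝ) ^ 2)
    (by positivity) hA hn hab hl t)
  unfold Matrix.trace
  refine Finset.sum_le_sum fun v _ => ?_
  split_ifs with hv
  · exact Pt_pow_le _ a hw0 hwa (wt_sum A a b hA hab) hN hN0 t v v hv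
  · refine matpow_nonneg _ ?_ t _ _
    intro x y
    rw [Matrix.add_apply, Matrix.smul_apply, smul_eq_mul]
    have := Qt_nonneg _ a hw0 hwa hN hN0 x y
    have := Zt_nonneg x y
    positivity

lemma mom_lower (a b : ℝ) (hb : 0 < b) (hba : b < a) (hab : a + b = 2) (k : ℕ)
    (hA : A.card = n) (hn : 2 ≤ n) (hN : 2 * a * k ≤ ((2 * n : ℕ) : ℝ)) (hk : k ≤ 2 * n)
    (hl : ∀ α : Fin k → Fin 4, 1 / 2 ≤ lam a b n α) (t : ℕ) :
    Gs a b k n t 0 * (1 - 2 ^ k * k ^ 2 / ((2 * n : ℕ) : ℝ) -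
      t * (4 * a * k / ((2 * n : ℕ) : ℝ)) * (2 ^ k * k ^ 2 / ((2 * n : ℕ) : ℝ))) ≤
    (∑ v : Fin k → Fin (2 * n), if Function.Injective v then (Pt k (wt a b A) ^ t) v v else 0) := by
  classical
  have hl0 : ∀ α : Fin k → Fin 4, 0 ≤ lam a b n α := fun α => by linarith [hl α]
  have hw0 : ∀ i, 0 ≤ wt a b A i := by intro i; unfold wt; split_ifs <;> linarith
  have hwa : ∀ i, wt a b A i ≤ a := by intro i; unfold wt; split_ifs <;> linarith
  have hN0 : (0:ℝ) < ((2 * n : ℕ) : ℝ) := by have : 0 < 2 * n := by omega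
                                             exact_mod_cast this
  have hn0 : (0:ℝ) < n := by have : 0 < n := by omega
                             exact_mod_cast this
  set N : ℝ := ((2 * n : ℕ) : ℝ) with hNdef
  set Q := Qt k (wt a b A) with hQ
  set Y : (Fin k → Fin (2 * n)) → Prop := Function.Injective with hY
  set c1 : ℝ := 2 ^ k * k ^ 2 / N with hc1
  have hQ0 : ∀ x y, 0 ≤ Q x y := Qt_nonneg _ a hw0 hwa hN hN0
  set G := Gs a b k n t 0 with hG
  have hGe : ∀ v u, (Q ^ t) v u ≤ G / n ^ k := by
    intro v u
    have := Qt_pow_entry A a b hA hn hab hl0 t v u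
    simpa [hG, Gs] using this
  have hGe1 : ∀ v u, (Q ^ (t - 1)) v u ≤ 2 * G / n ^ k := by
    intro v u
    refine (Qt_pow_entry A a b hA hn hab hl0 (t - 1) v u).trans ?_
    gcongr
    rw [hG, Gs, Finset.mul_sum]
    refine Finset.sum_le_sum fun α _ => ?_
    rw [← mul_assoc, add_zero]
    refine mul_le_mul_of_nonneg_right ?_ (Finset.prod_nonneg fun s _ => rk_nonneg n (by omega) _)
    cases t with
    | zero => simp
    | succ t =>
      rw [Nat.add_sub_cancel, pow_succ]
      have := pow_nonneg (hl0 α) t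
      nlinarith [hl α]
  have hG0 : 0 ≤ G := by
    rw [hG, Gs]
    refine Finset.sum_nonneg fun α _ => mul_nonneg (pow_nonneg (by linarith [hl α]) _)
      (Finset.prod_nonneg fun s _ => rk_nonneg n (by omega) _)
  have hcard : (∑ v : Fin k → Fin (2 * n), if Y v then (0:ℝ) else 1) / n ^ k ≤ c1 := by
    rw [div_le_iff₀ (by positivity)]
    refine (card_noninj (2 * n) k (by omega) hk).trans (le_of_eq ?_)
    rw [hc1, ← hNdef]
    have : N ^ k = 2 ^ k * n ^ k := by rw [hNdef]; push_cast; rw [mul_pow]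
    rw [this]; ring
  -- step 1
  have s1 : ∑ v, (if Y v then (Rs Y Q ^ t) v v else 0) ≤
      ∑ v, if Y v then (Pt k (wt a b A) ^ t) v v else 0 := by
    refine Finset.sum_le_sum fun v _ => ?_
    split_ifs
    · refine matpow_mono _ _ ?_ ?_ t v v
      · intro x y; unfold Rs; split_ifs; exact hQ0 _ _; exact le_rfl
      · intro x y; unfold Rs; split_ifs with h
        · exact Qt_le_Pt _ hw0 (wt_sum A a b hA hab) hN0.ne' x y h.1 h.2
        · exact Pt_nonneg _ hw0 _ _
    · exact le_rfl
  have s2 := Rs_trace Y Q hQ0 t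
  have s3 : G - G * c1 ≤ ∑ x, (if Y x then (Q ^ t) x x else 0) := by
    have e1 : ∑ x, (if Y x then (Q ^ t) x x else 0) + ∑ x, (if Y x then 0 else (Q ^ t) x x) = G := by
      rw [← Finset.sum_add_distrib, hG, Gs]
      simp_rw [add_zero]
      rw [← Qt_pow_trace A a b hA (by omega) hab t]
      unfold Matrix.trace
      exact Finset.sum_congr rfl fun x _ => by split_ifs <;> simp [hQ]
    have e2 : ∑ x, (if Y x then 0 else (Q ^ t) x x) ≤ G * c1 := by
      calc _ ≤ ∑ x, (if Y x then (0:ℝ) else 1) * (G / n ^ k) := Finset.sum_le_sum fun x _ => by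
            split_ifs
            · simp
            · rw [one_mul]; exact hGe x x
        _ = G * ((∑ v : Fin k → Fin (2 * n), if Y v then (0:ℝ) else 1) / n ^ k) := by
            rw [← Finset.sum_mul]; ring
        _ ≤ _ := mul_le_mul_of_nonneg_left hcard hG0
    linarith
  have s4 : ∑ x, ∑ y, (if ¬ Y x ∧ Y y then Q x y else 0) * (Q ^ (t-1)) y x ≤
      (4 * a * k / N) * (G * c1) := by
    have e1 : ∀ x, ∑ y, (if ¬ Y x ∧ Y y then Q x y else 0) ≤
        (if Y x then (0:ℝ) else 1) * (2 * a * k / N) := by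
      intro x
      by_cases hx : Y x
      · simp [hx]
      · simp only [hx, not_false_eq_true, true_and, if_false, one_mul]
        calc ∑ y, (if Y y then Q x y else 0) ≤ ∑ y, ∑ s, ∑ j,
              2 * wt a b A (x s) * wt a b A j / N ^ 2 *
              (if Function.update x s j = y then 1 else 0) := by
              refine Finset.sum_le_sum fun y _ => ?_
              split_ifs with hy
              · rw [hQ]; unfold Qt
                rw [if_neg (by rintro rfl; exact hx hy), zero_add]
              · refine Finset.sum_nonneg fun i _ => Finset.sum_nonneg fun j _ => ?_
                have := hw0 (x i); have := hw0 j
                split_ifs <;> positivity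
          _ = ∑ s, 2 * wt a b A (x s) / N := by
              rw [Finset.sum_comm]
              refine Finset.sum_congr rfl fun s _ => ?_
              rw [Finset.sum_comm]
              simp_rw [← Finset.mul_sum]
              simp only [Finset.sum_ite_eq, Finset.mem_univ, if_true, mul_one]
              rw [← Finset.sum_div, ← Finset.mul_sum, wt_sum A a b hA hab, ← hNdef]
              field_simp
          _ ≤ ∑ s : Fin k, 2 * a / N := Finset.sum_le_sum fun s _ => by
              have := hwa (x s)
              gcongr
          _ = _ := by simp; ring
    calc _ ≤ ∑ x, ∑ y, (if ¬ Y x ∧ Y y then Q x y else 0) * (2 * G / n ^ k) := by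
          refine Finset.sum_le_sum fun x _ => Finset.sum_le_sum fun y _ => ?_
          refine mul_le_mul_of_nonneg_left (hGe1 _ _) ?_
          split_ifs
          · exact hQ0 _ _
          · exact le_rfl
      _ ≤ ∑ x, ((if Y x then (0:ℝ) else 1) * (2 * a * k / N)) * (2 * G / n ^ k) := by
          refine Finset.sum_le_sum fun x _ => ?_
          rw [← Finset.sum_mul]
          exact mul_le_mul_of_nonneg_right (e1 x) (by positivity)
      _ = (4 * a * k / N) * (G * ((∑ v : Fin k → Fin (2 * n), if Y v then (0:ℝ) else 1) / n ^ k)) := by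
          rw [← Finset.sum_mul, ← Finset.sum_mul]; ring
      _ ≤ _ := by
          have : 0 < a := by linarith
          gcongr
  have s5 : t * ∑ x, ∑ y, (if ¬ Y x ∧ Y y then Q x y else 0) * (Q ^ (t-1)) y x ≤
      t * ((4 * a * k / N) * (G * c1)) := mul_le_mul_of_nonneg_left s4 (by positivity)
  calc _ = G - G * c1 - t * ((4 * a * k / N) * (G * c1)) := by ring
    _ ≤ _ := by linarith

end

open Filter Topology in
lemma tendsto_NN : Tendsto (fun n : ℕ => (2 * n : ℝ)) atTop atTop :=
  Tendsto.const_mul_atTop (by norm_num) tendsto_natCast_atTop_atTop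

open Filter Topology in
lemma tendsto_iNN : Tendsto (fun n : ℕ => (1 : ℝ) / (2 * n)) atTop (𝓝 0) := by
  have h := tendsto_NN.inv_tendsto_atTop
  refine h.congr fun n => ?_
  simp only [Pi.inv_apply, one_div]

/-- the time -/
def tm (b c : ℝ) (n : ℕ) : ℕ := ⌊((2 * n : ℝ) / (2 * b)) * (Real.log (2 * n) - c)⌋₊

open Filter Topology in
lemma tm_lim1 (b c : ℝ) (hb : 0 < b) :
    Tendsto (fun n : ℕ => (tm b c n : ℝ) / (2 * n) - (Real.log (2 * n) - c) / (2 * b)) atTop (𝓝 0) := by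
  have hL : Tendsto (fun n : ℕ => Real.log (2 * n)) atTop atTop :=
    Real.tendsto_log_atTop.comp tendsto_NN
  have hi : Tendsto (fun n : ℕ => (2 * n : ℝ)⁻¹) atTop (𝓝 0) := tendsto_NN.inv_tendsto_atTop
  refine squeeze_zero_norm' ?_ hi
  filter_upwards [hL.eventually_ge_atTop c, eventually_gt_atTop 0] with n h1 h2
  have hn : (0:ℝ) < 2 * n := by positivity
  have hx : 0 ≤ ((2 * n : ℝ) / (2 * b)) * (Real.log (2 * n) - c) :=
    mul_nonneg (by positivity) (by linarith)
  have h3 := Nat.floor_le hx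
  have h4 := Nat.lt_floor_add_one (((2 * n : ℝ) / (2 * b)) * (Real.log (2 * n) - c))
  have h5 : (tm b c n : ℝ) / (2 * n) - (Real.log (2 * n) - c) / (2 * b) =
    ((tm b c n : ℝ) - ((2 * n : ℝ) / (2 * b)) * (Real.log (2 * n) - c)) / (2 * n) := by
    field_simp
  rw [h5, Real.norm_eq_abs, abs_div, abs_of_pos hn, div_eq_mul_inv]
  refine mul_le_of_le_one_left (by positivity) ?_
  rw [abs_le]
  unfold tm
  constructor <;> linarith

open Filter Topology in
lemma tm_lim2 (b c : ℝ) (hb : 0 < b) :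
    Tendsto (fun n : ℕ => (tm b c n : ℝ) / (2 * n) * (1 / (2 * n))) atTop (𝓝 0) := by
  have hi : Tendsto (fun n : ℕ => (1 : ℝ) / (2 * n)) atTop (𝓝 0) := tendsto_iNN
  have hlog : Tendsto (fun n : ℕ => Real.log (2 * n) / (2 * n)) atTop (𝓝 0) := by
    have : Tendsto (fun x : ℝ => Real.log x / x) atTop (𝓝 0) := by
      simpa using Real.isLittleO_log_id_atTop.tendsto_div_nhds_zero
    exact this.comp tendsto_NN
  have h := ((tm_lim1 b c hb).mul hi).add
    ((hlog.sub (hi.const_mul c)).mul_const (1 / (2 * b)))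
  simp only [mul_zero, sub_zero, zero_mul, add_zero] at h
  refine h.congr fun n => ?_
  ring

open Filter Topology in
lemma log_lim (b c : ℝ) (hb : 0 < b) (Θ C : ℝ) :
    Tendsto (fun n : ℕ => (tm b c n : ℝ) * Real.log (1 - Θ / (2 * n) + C / (2 * n) ^ 2) +
      Θ / (2 * b) * Real.log (2 * n)) atTop (𝓝 (Θ * c / (2 * b))) := by
  have hi : Tendsto (fun n : ℕ => (1 : ℝ) / (2 * n)) atTop (𝓝 0) := tendsto_iNN
  have hy : Tendsto (fun n : ℕ => Θ - C * ((1 : ℝ) / (2 * n))) atTop (𝓝 Θ) := by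
    simpa using (hi.const_mul C).const_sub Θ
  have hx : Tendsto (fun n : ℕ => (Θ - C * ((1 : ℝ) / (2 * n))) * (1 / (2 * n))) atTop (𝓝 0) := by
    simpa using hy.mul hi
  have h2 := tm_lim2 b c hb
  have hA : Tendsto (fun n : ℕ => (tm b c n : ℝ) *
      ((Θ - C * ((1 : ℝ) / (2 * n))) * (1 / (2 * n)) +
        Real.log (1 - (Θ - C * ((1 : ℝ) / (2 * n))) * (1 / (2 * n))))) atTop (𝓝 0) := by
    have hb' : Tendsto (fun n : ℕ => 2 * ((tm b c n : ℝ) / (2 * n) * (1 / (2 * n))) *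
      (Θ - C * ((1 : ℝ) / (2 * n))) ^ 2) atTop (𝓝 0) := by
      simpa using (h2.const_mul 2).mul (hy.pow 2)
    refine squeeze_zero_norm' ?_ hb'
    have hs : ∀ᶠ n : ℕ in atTop, |(Θ - C * ((1 : ℝ) / (2 * n))) * (1 / (2 * n))| < 1 / 2 := by
      have := hx.abs
      rw [abs_zero] at this
      exact this.eventually_lt_const (by norm_num)
    filter_upwards [hs, eventually_gt_atTop 0] with n h3 h4
    set x := (Θ - C * ((1 : ℝ) / (2 * n))) * (1 / (2 * n)) with hxd
    have h5 := Real.abs_log_sub_add_sum_range_le (x := x) (by linarith) 1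
    simp only [Finset.sum_range_one, zero_add, pow_one, Nat.cast_zero, div_one] at h5
    have h6 : |x| ^ (1 + 1) / (1 - |x|) ≤ 2 * x ^ 2 := by
      rw [div_le_iff₀ (by linarith)]
      norm_num [sq_abs]
      nlinarith [sq_nonneg x]
    rw [Real.norm_eq_abs, abs_mul, Nat.abs_cast]
    calc (tm b c n : ℝ) * |x + Real.log (1 - x)| ≤ tm b c n * (2 * x ^ 2) :=
          mul_le_mul_of_nonneg_left (h5.trans h6) (Nat.cast_nonneg _)
      _ = _ := by rw [hxd]; field_simp
  have h := (hA.add (h2.const_mul C)).sub ((tm_lim1 b c hb).const_mul Θ)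
  have h' := h.add (tendsto_const_nhds (x := Θ * c / (2 * b)))
  simp only [mul_zero, sub_zero, zero_add, add_zero] at h'
  refine h'.congr' ?_
  filter_upwards [eventually_gt_atTop 0] with n hn
  have e : (1:ℝ) - (Θ - C * ((1 : ℝ) / (2 * n))) * (1 / (2 * n)) = 1 - Θ / (2 * n) + C / (2 * n) ^ 2 := by
    field_simp; ring
  rw [e]
  field_simp
  ring

/-- limiting weights -/
def ell (c : ℝ) (α : Fin 4) : ℝ :=
  match α with
  | 0 => 1
  | 1 => 0
  | 2 => Real.exp c / 2
  | 3 => 0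

open Filter Topology in
lemma rk_lim (a b : ℝ) (hb : 0 < b) (hba : b < a) (c : ℝ) (α : Fin 4) :
    Tendsto (fun n : ℕ => Real.exp (th a b α * c / (2 * b)) *
      (rk n α * Real.exp (-(th a b α / (2 * b) * Real.log (2 * n))))) atTop (𝓝 (ell c α)) := by
  have hi : Tendsto (fun n : ℕ => (1 : ℝ) / (2 * n)) atTop (𝓝 0) := tendsto_iNN
  have hL : Tendsto (fun n : ℕ => Real.log (2 * n)) atTop atTop :=
    Real.tendsto_log_atTop.comp tendsto_NN
  have hexp : ∀ d : ℝ, 0 < d → Tendsto (fun n : ℕ => Real.exp (-(d * Real.log (2 * n)))) atTop (𝓝 0) :=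
    fun d hd => Real.tendsto_exp_neg_atTop_nhds_zero.comp (hL.const_mul_atTop hd)
  have hr : Tendsto (fun n : ℕ => ((n:ℝ) - 1) * Real.exp (-(Real.log (2 * n)))) atTop (𝓝 (1/2)) := by
    have : Tendsto (fun n : ℕ => (1:ℝ)/2 - 1 / (2 * n)) atTop (𝓝 (1/2)) := by
      have h := hi.const_sub (1/2)
      rw [sub_zero] at h
      exact h
    refine this.congr' ?_
    filter_upwards [eventually_gt_atTop 0] with n hn
    have hn' : (0:ℝ) < 2 * n := by positivity
    rw [Real.exp_neg, Real.exp_log hn']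
    field_simp
  fin_cases α
  · simp [th, rk, ell]
  · have h := (hr.mul (hexp (a / b - 1) (by rw [sub_pos, lt_div_iff₀ hb]; linarith))).const_mul
      (Real.exp (2 * a * c / (2 * b)))
    simp only [mul_zero] at h
    refine h.congr fun n => ?_
    simp only [th, rk]
    rw [mul_assoc ((n:ℝ) - 1), ← Real.exp_add]
    congr 3
    field_simp
    ring
  · have h := hr.const_mul (Real.exp c)
    have e : Real.exp c * (1 / 2) = ell c 2 := by simp [ell]; ring
    rw [e] at h
    refine h.congr fun n => ?_
    simp only [th, rk]
    congr 2
    · field_simp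
    · congr 2
      field_simp
  · have h := (hexp a (by linarith)).const_mul (Real.exp (2 * a * b * c / (2 * b)))
    simp only [mul_zero] at h
    refine h.congr fun n => ?_
    simp only [th, rk, one_mul]
    congr 4
    field_simp

open Filter Topology in
lemma term_lim (a b : ℝ) (hb : 0 < b) (hba : b < a) (c : ℝ) (k : ℕ) (C : ℝ) (α : Fin k → Fin 4) :
    Tendsto (fun n : ℕ => (lam a b n α + C / ((2 * n : ℕ) : ℝ) ^ 2) ^ (tm b c n) *
      ∏ s, rk n (α s)) atTop (𝓝 (∏ s, ell c (α s))) := by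
  set Θ := ∑ s, th a b (α s) with hΘ
  have h1 := (log_lim b c hb Θ C).sub_const (Θ * c / (2 * b))
  rw [sub_self] at h1
  have h2 := (Real.continuous_exp.tendsto 0).comp h1
  rw [Real.exp_zero] at h2
  have h3 := h2.mul (tendsto_finsetProd Finset.univ (fun s _ => rk_lim a b hb hba c (α s)))
  rw [one_mul] at h3
  refine h3.congr' ?_
  have hi : Tendsto (fun n : ℕ => (1 : ℝ) / (2 * n)) atTop (𝓝 0) := tendsto_iNN
  have hp : Tendsto (fun n : ℕ => (1:ℝ) - Θ * (1 / (2 * n)) + C * (1 / (2 * n)) ^ 2) atTop (𝓝 1) := by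
    simpa using ((hi.const_mul Θ).const_sub 1).add ((hi.pow 2).const_mul C)
  filter_upwards [hp.eventually_const_lt (show (0:ℝ) < 1 by norm_num)] with n hn
  have e1 : lam a b n α + C / ((2 * n : ℕ) : ℝ) ^ 2 = 1 - Θ / (2 * n) + C / (2 * n) ^ 2 := by
    rw [lam, hΘ, Finset.sum_div]; push_cast; rfl
  have e2 : (1:ℝ) - Θ * (1 / (2 * n)) + C * (1 / (2 * n)) ^ 2 = 1 - Θ / (2 * n) + C / (2 * n) ^ 2 := by
    rw [div_pow]; ring
  rw [e2] at hn
  rw [e1, Finset.prod_mul_distrib, Finset.prod_mul_distrib, ← Real.exp_sum, ← Real.exp_sum]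
  set y := (1:ℝ) - Θ / (2 * n) + C / (2 * n) ^ 2
  have e3 : y ^ (tm b c n) = Real.exp (tm b c n * Real.log y) := by
    rw [mul_comm, Real.exp_mul, Real.exp_log hn, Real.rpow_natCast]
  rw [e3, Finset.sum_neg_distrib, ← Finset.sum_mul, ← Finset.sum_div, ← Finset.sum_div,
    ← Finset.sum_mul, ← hΘ]
  simp only [Function.comp]
  rw [mul_left_comm (Real.exp (Θ * c / (2 * b))), mul_left_comm, ← Real.exp_add, ← Real.exp_add, mul_comm]
  congr 2
  ring

open Filter Topology in
lemma Gs_lim (a b : ℝ) (hb : 0 < b) (hba : b < a) (c : ℝ) (k : ℕ) (C : ℝ) :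
    Tendsto (fun n : ℕ => Gs a b k n (tm b c n) (C / ((2 * n : ℕ) : ℝ) ^ 2)) atTop
      (𝓝 ((1 + Real.exp c / 2) ^ k)) := by
  have h := tendsto_finsetSum Finset.univ (fun α _ => term_lim a b hb hba c k C α)
  have e : ∑ α : Fin k → Fin 4, ∏ s, ell c (α s) = (1 + Real.exp c / 2) ^ k := by
    have := Finset.prod_univ_sum (fun _ : Fin k => (Finset.univ : Finset (Fin 4))) (fun _ j => ell c j)
    rw [Fintype.piFinset_univ] at this
    rw [← this]
    simp [Fin.sum_univ_four, ell]
  rw [e] at h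
  exact h

lemma fx_sum (N k : ℕ) (hk : k ≤ N) :
    ∑ y : Equiv.Perm (Fin N), ((fx y).descFactorial k : ℝ) = N.factorial := by
  classical
  simp only [fx_desc]
  rw [Finset.sum_comm]
  have h1 : ∀ v u : Fin k → Fin N, Function.Injective v → Function.Injective u →
      ∑ y : Equiv.Perm (Fin N), (if y ∘ v = u then (1:ℝ) else 0) =
      ∑ y : Equiv.Perm (Fin N), (if y ∘ v = v then (1:ℝ) else 0) := by
    intro v u hv hu
    have hpt : MulAction.IsMultiplyPretransitive (Equiv.Perm (Fin N)) (Fin N) k :=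
      Equiv.Perm.isMultiplyPretransitive _ _
    obtain ⟨σ, hσ⟩ := hpt.exists_smul_eq (⟨v, hv⟩ : Fin k ↪ Fin N) ⟨u, hu⟩
    have hσ' : σ ∘ v = u := by
      funext i
      exact congrFun (congrArg (fun f : Fin k ↪ Fin N => (f : Fin k → Fin N)) hσ) i
    refine (Fintype.sum_equiv (Equiv.mulLeft σ) _ _ fun y => ?_).symm
    refine if_congr ?_ rfl rfl
    rw [← hσ']
    simp only [Equiv.coe_mulLeft, Equiv.Perm.coe_mul, Function.comp_assoc]
    exact ⟨fun h => by rw [h], fun h => σ.injective.comp_left h⟩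
  have h2 : ∀ v : Fin k → Fin N, Function.Injective v →
      ∑ u : Fin k → Fin N, (if Function.Injective u then
        ∑ y : Equiv.Perm (Fin N), (if y ∘ v = u then (1:ℝ) else 0) else 0) = N.factorial := by
    intro v hv
    have e : ∀ u : Fin k → Fin N, (if Function.Injective u then
        ∑ y : Equiv.Perm (Fin N), (if y ∘ v = u then (1:ℝ) else 0) else 0) =
        ∑ y : Equiv.Perm (Fin N), (if y ∘ v = u then (1:ℝ) else 0) := by
      intro u
      split_ifs with h
      · rfl
      · symm
        refine Finset.sum_eq_zero fun y _ => if_neg fun h' => h ?_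
        rw [← h']
        exact y.injective.comp hv
    simp only [e]
    rw [Finset.sum_comm]
    simp [Fintype.card_perm]
  obtain ⟨v₀, hv₀⟩ : ∃ v : Fin k → Fin N, Function.Injective v := ⟨Fin.castLE hk, Fin.castLE_injective hk⟩
  have h3 : ∀ v : Fin k → Fin N, Function.Injective v →
      ∑ y : Equiv.Perm (Fin N), (if y ∘ v = v then (1:ℝ) else 0) =
      ∑ y : Equiv.Perm (Fin N), (if y ∘ v₀ = v₀ then (1:ℝ) else 0) := by
    intro v hv
    have a1 := h2 v hv
    have a2 := h2 v₀ hv₀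
    have b : ∀ v : Fin k → Fin N, Function.Injective v →
      ∑ u : Fin k → Fin N, (if Function.Injective u then
        ∑ y : Equiv.Perm (Fin N), (if y ∘ v = u then (1:ℝ) else 0) else 0) =
      (∑ u : Fin k → Fin N, (if Function.Injective u then (1:ℝ) else 0)) *
        ∑ y : Equiv.Perm (Fin N), (if y ∘ v = v then (1:ℝ) else 0) := by
      intro v hv
      rw [Finset.sum_mul]
      refine Finset.sum_congr rfl fun u _ => ?_
      split_ifs with h
      · rw [h1 v u hv h, one_mul]
      · rw [zero_mul]
    rw [b v hv] at a1
    rw [b v₀ hv₀] at a2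
    have hne : (∑ u : Fin k → Fin N, (if Function.Injective u then (1:ℝ) else 0)) ≠ 0 := by
      intro h0
      rw [h0, zero_mul] at a1
      exact (Nat.cast_ne_zero.mpr N.factorial_ne_zero) a1.symm
    exact mul_left_cancel₀ hne (a1.trans a2.symm)
  rw [← h2 v₀ hv₀]
  refine Finset.sum_congr rfl fun v _ => ?_
  split_ifs with h
  · rw [h3 v h, h1 v₀ v hv₀ h]
  · simp

lemma bonf (F j J : ℕ) :
    |(if F = j then (1:ℝ) else 0) - ∑ i ∈ Finset.range J, (-1 : ℝ) ^ i * (F.descFactorial (j + i) : ℝ) /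
      (j.factorial * i.factorial)| ≤ (F.descFactorial (j + J) : ℝ) / (j.factorial * J.factorial) := by
  have key : ∀ i, (F.descFactorial (j + i) : ℝ) / (j.factorial * i.factorial) =
      (F.choose j : ℝ) * ((F - j).choose i : ℝ) := by
    intro i
    rw [← Nat.descFactorial_mul_descFactorial (Nat.le_add_right j i), Nat.add_sub_cancel_left,
      Nat.descFactorial_eq_factorial_mul_choose, Nat.descFactorial_eq_factorial_mul_choose]
    push_cast
    field_simp
  simp only [mul_div_assoc, key]
  by_cases h : F < j
  · simp [Nat.choose_eq_zero_of_lt h, h.ne]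
  by_cases h' : F = j
  · subst h'
    rcases J with _ | J
    · simp
    · rw [Finset.sum_range_succ']
      simp
  · obtain ⟨m, hm⟩ : ∃ m, F - j = m + 1 := ⟨F - j - 1, by omega⟩
    rw [hm, if_neg h']
    rcases J with _ | J
    · simp
    have e : (∑ i ∈ Finset.range (J + 1), ((-1) ^ i * (m + 1).choose i : ℝ)) = (-1) ^ J * m.choose J := by
      exact_mod_cast Int.alternating_sum_range_choose_eq_choose (n := m) (m := J)
    have e2 : ∑ i ∈ Finset.range (J + 1), (-1 : ℝ) ^ i * ((F.choose j : ℝ) * ((m + 1).choose i : ℝ)) =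
        (F.choose j : ℝ) * ((-1) ^ J * m.choose J) := by
      rw [← e, Finset.mul_sum]
      exact Finset.sum_congr rfl fun i _ => by ring
    rw [e2, zero_sub, abs_neg, abs_mul, abs_mul, abs_pow, abs_neg, abs_one, one_pow, one_mul,
      Nat.abs_cast, Nat.abs_cast]
    refine mul_le_mul_of_nonneg_left ?_ (Nat.cast_nonneg _)
    rw [Nat.choose_succ_succ]
    push_cast
    linarith [(Nat.cast_nonneg (m.choose (J+1)) : (0:ℝ) ≤ _)]

lemma pois_term (m : ℝ) (j i : ℕ) : (-1 : ℝ) ^ i * m ^ (j + i) / (j.factorial * i.factorial) =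
    m ^ j / j.factorial * ((-m) ^ i / i.factorial) := by
  rw [pow_add, neg_pow m]
  field_simp

open Filter Topology in
lemma pois_sum (m : ℝ) (j : ℕ) : Tendsto (fun J : ℕ => ∑ i ∈ Finset.range J,
    (-1 : ℝ) ^ i * m ^ (j + i) / (j.factorial * i.factorial)) atTop (𝓝 (poissonPMF m j)) := by
  have h1 : HasSum (fun i : ℕ => (-m) ^ i / (i.factorial : ℝ)) (Real.exp (-m)) := by
    rw [Real.exp_eq_exp_ℝ]
    exact NormedSpace.expSeries_div_hasSum_exp (-m)
  have h2 := (h1.mul_left (m ^ j / j.factorial)).tendsto_sum_nat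
  have e : m ^ j / (j.factorial : ℝ) * Real.exp (-m) = poissonPMF m j := by
    unfold poissonPMF; ring
  rw [e] at h2
  refine h2.congr fun J => Finset.sum_congr rfl fun i _ => (pois_term m j i).symm

open Filter Topology in
lemma pois_tail (m : ℝ) (j : ℕ) : Tendsto (fun J : ℕ =>
    m ^ (j + J) / (j.factorial * J.factorial : ℝ)) atTop (𝓝 0) := by
  have h := (FloorSemiring.tendsto_pow_div_factorial_atTop m).const_mul (m ^ j / j.factorial)
  rw [mul_zero] at h
  refine h.congr fun J => ?_
  rw [pow_add]; field_simp

open Filter Topology in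
lemma moments_to_poisson {Ω : ℕ → Type} [∀ n, Fintype (Ω n)] (p : ∀ n, Ω n → ℝ)
    (hp : ∀ n x, 0 ≤ p n x) (F : ∀ n, Ω n → ℕ) (m : ℝ)
    (h : ∀ k : ℕ, Tendsto (fun n => ∑ x, p n x * ((F n x).descFactorial k : ℝ)) atTop (𝓝 (m ^ k)))
    (j : ℕ) :
    Tendsto (fun n => ∑ x, p n x * (if F n x = j then 1 else 0)) atTop (𝓝 (poissonPMF m j)) := by
  rw [Metric.tendsto_nhds]
  intro ε hε
  obtain ⟨J, hJ1, hJ2⟩ := (((pois_sum m j).eventually (Metric.ball_mem_nhds _ (show 0 < ε / 4 by linarith))).and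
    ((pois_tail m j).eventually (gt_mem_nhds (show 0 < ε / 4 by linarith)))).exists
  have hS : Tendsto (fun n => ∑ i ∈ Finset.range J, (-1 : ℝ) ^ i *
      (∑ x, p n x * ((F n x).descFactorial (j + i) : ℝ)) / (j.factorial * i.factorial)) atTop
      (𝓝 (∑ i ∈ Finset.range J, (-1 : ℝ) ^ i * m ^ (j + i) / (j.factorial * i.factorial))) :=
    tendsto_finsetSum _ fun i _ => ((h (j + i)).const_mul _).div_const _
  have hT : Tendsto (fun n => (∑ x, p n x * ((F n x).descFactorial (j + J) : ℝ)) /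
      (j.factorial * J.factorial : ℝ)) atTop (𝓝 (m ^ (j + J) / (j.factorial * J.factorial : ℝ))) :=
    (h (j + J)).div_const _
  filter_upwards [hS.eventually (Metric.ball_mem_nhds _ (show 0 < ε / 4 by linarith)),
    hT.eventually (gt_mem_nhds hJ2)] with n h1 h2
  have h3 : |(∑ x, p n x * (if F n x = j then (1:ℝ) else 0)) - ∑ i ∈ Finset.range J, (-1 : ℝ) ^ i *
      (∑ x, p n x * ((F n x).descFactorial (j + i) : ℝ)) / (j.factorial * i.factorial)| ≤
      (∑ x, p n x * ((F n x).descFactorial (j + J) : ℝ)) / (j.factorial * J.factorial : ℝ) := by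
    have e : (∑ x, p n x * (if F n x = j then (1:ℝ) else 0)) - ∑ i ∈ Finset.range J, (-1 : ℝ) ^ i *
      (∑ x, p n x * ((F n x).descFactorial (j + i) : ℝ)) / (j.factorial * i.factorial) =
      ∑ x, p n x * ((if F n x = j then (1:ℝ) else 0) - ∑ i ∈ Finset.range J, (-1 : ℝ) ^ i *
        ((F n x).descFactorial (j + i) : ℝ) / (j.factorial * i.factorial)) := by
      simp only [mul_sub, Finset.sum_sub_distrib]
      congr 1
      simp only [Finset.mul_sum, Finset.sum_div]
      rw [Finset.sum_comm]
      refine Finset.sum_congr rfl fun x _ => Finset.sum_congr rfl fun i _ => by ring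
    rw [e, Finset.sum_div]
    refine (Finset.abs_sum_le_sum_abs _ _).trans (Finset.sum_le_sum fun x _ => ?_)
    rw [abs_mul, abs_of_nonneg (hp n x), mul_div_assoc]
    exact mul_le_mul_of_nonneg_left (bonf _ _ _) (hp n x)
  rw [Real.dist_eq, abs_lt] at h1 hJ1 ⊢
  rw [abs_le] at h3
  constructor <;> linarith [h3.1, h3.2, h1.1, h1.2, hJ1.1, hJ1.2]
open Filter Topology in
lemma lam_ge (a b : ℝ) (hb : 0 < b) (hba : b < a) (hab : a + b = 2) (k n : ℕ) (hn : 0 < n)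
    (h : 16 * (k:ℝ) ≤ ((2 * n : ℕ) : ℝ)) (α : Fin k → Fin 4) : 1 / 2 ≤ lam a b n α := by
  have hN : (0:ℝ) < ((2 * n : ℕ) : ℝ) := by exact_mod_cast (by omega : 0 < 2 * n)
  have h1 : ∀ β : Fin 4, th a b β ≤ 8 := by
    intro β
    fin_cases β <;> simp only [th] <;> nlinarith
  unfold lam
  have h2 : ∑ s, th a b (α s) / ((2 * n : ℕ) : ℝ) ≤ ∑ s : Fin k, 8 / ((2 * n : ℕ) : ℝ) :=
    Finset.sum_le_sum fun s _ => by gcongr; exact h1 _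
  rw [Finset.sum_const, Finset.card_univ, Fintype.card_fin, nsmul_eq_mul] at h2
  have h3 : (k:ℝ) * (8 / ((2 * n : ℕ) : ℝ)) ≤ 1 / 2 := by
    rw [← mul_div_assoc, div_le_iff₀ hN]; linarith
  linarith

open Filter Topology in
lemma mom_lim (a b : ℝ) (hb : 0 < b) (hba : b < a) (hab : a + b = 2) (c : ℝ)
    (A : ∀ n : ℕ, Finset (Fin (2 * n))) (hA : ∀ n, (A n).card = n) (k : ℕ) :
    Tendsto (fun n : ℕ => ∑ y, (transMat a b (A n) ^ (tm b c n)) 1 y * ((fx y).descFactorial k : ℝ))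
      atTop (𝓝 ((1 + Real.exp c / 2) ^ k)) := by
  simp only [moment_eq]
  have hN : Tendsto (fun n : ℕ => ((2 * n : ℕ) : ℝ)) atTop atTop := by
    simpa using tendsto_NN
  have ev : ∀ᶠ n : ℕ in atTop, 2 ≤ n ∧ 2 * a * k ≤ ((2 * n : ℕ) : ℝ) ∧ k ≤ 2 * n ∧
      ∀ α : Fin k → Fin 4, 1 / 2 ≤ lam a b n α := by
    filter_upwards [eventually_ge_atTop 2, hN.eventually_ge_atTop (2 * a * k),
      hN.eventually_ge_atTop (16 * (k:ℝ)), eventually_ge_atTop k] with n h1 h2 h3 h4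
    exact ⟨h1, h2, by omega, lam_ge a b hb hba hab k n (by omega) h3⟩
  have hU := Gs_lim a b hb hba c k (((k:ℝ) + 1) * a ^ 2 * k ^ 2)
  have hL := Gs_lim a b hb hba c k 0
  have hf : Tendsto (fun n : ℕ => (1:ℝ) - 2 ^ k * k ^ 2 * (1 / (2 * n)) -
      (4 * a * k * (2 ^ k * k ^ 2)) * ((tm b c n : ℝ) / (2 * n) * (1 / (2 * n)))) atTop (𝓝 1) := by
    simpa only [mul_zero, sub_zero] using
      ((tendsto_iNN.const_mul ((2:ℝ) ^ k * k ^ 2)).const_sub 1).sub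
        ((tm_lim2 b c hb).const_mul (4 * a * k * (2 ^ k * k ^ 2)))
  have hL' := hL.mul hf
  rw [mul_one] at hL'
  refine tendsto_of_tendsto_of_tendsto_of_le_of_le' hL' hU ?_ ?_
  · filter_upwards [ev] with n ⟨h1, h2, h3, h4⟩
    refine le_trans (le_of_eq ?_) (mom_lower (A n) a b hb hba hab k (hA n) h1 h2 h3 h4 (tm b c n))
    rw [zero_div]
    congr 1
    push_cast
    ring
  · filter_upwards [ev] with n ⟨h1, h2, h3, h4⟩
    refine (mom_upper (A n) a b hb hba hab k (hA n) h1 h2 (fun α => by linarith [h4 α]) (tm b c n)).trans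
      (le_of_eq ?_)
    congr 1
    ring

lemma transMat_pow_nonneg (a b : ℝ) (hb : 0 < b) (hba : b < a) {N : ℕ} (A : Finset (Fin N)) (t : ℕ)
    (x y : Equiv.Perm (Fin N)) : 0 ≤ (transMat a b A ^ t) x y := by
  refine matpow_nonneg _ (fun x y => ?_) t x y
  rw [transMat_eq]
  have hw0 : ∀ i, 0 ≤ wt a b A i := by intro i; unfold wt; split_ifs <;> linarith
  refine Finset.sum_nonneg fun i _ => Finset.sum_nonneg fun j _ => ?_
  have := hw0 i
  have := hw0 j
  split_ifs <;> positivity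

lemma dTV_ge {N : ℕ} (p q : Equiv.Perm (Fin N) → ℝ) (K : ℕ) :
    (∑ j ∈ Finset.range K, |∑ x, p x * (if fx x = j then 1 else 0) -
      ∑ x, q x * (if fx x = j then 1 else 0)|) / 2 ≤ dTV p q := by
  unfold dTV
  refine div_le_div_of_nonneg_right ?_ (by norm_num)
  calc _ ≤ ∑ j ∈ Finset.range K, ∑ x : Equiv.Perm (Fin N), |p x - q x| * (if fx x = j then 1 else 0) := by
        refine Finset.sum_le_sum fun j _ => ?_
        rw [← Finset.sum_sub_distrib]
        refine (Finset.abs_sum_le_sum_abs _ _).trans (Finset.sum_le_sum fun x _ => ?_)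
        split_ifs <;> simp
    _ = ∑ x : Equiv.Perm (Fin N), |p x - q x| * ∑ j ∈ Finset.range K, (if fx x = j then 1 else 0) := by
        rw [Finset.sum_comm]
        simp only [Finset.mul_sum]
    _ ≤ _ := by
        refine Finset.sum_le_sum fun x _ => mul_le_of_le_one_right (abs_nonneg _) ?_
        rw [Finset.sum_ite_eq]
        split_ifs <;> norm_num

lemma pois_summable (m : ℝ) : Summable (poissonPMF m) := by
  have := (Real.summable_pow_div_factorial m).mul_left (Real.exp (-m))
  refine this.congr fun k => ?_
  unfold poissonPMF; ring

open Filter Topology in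
lemma fam_lim (a b : ℝ) (hb : 0 < b) (hba : b < a) (hab : a + b = 2) (c : ℝ)
    (A : ∀ n : ℕ, Finset (Fin (2 * n))) (hA : ∀ n, (A n).card = n) (ε : ℝ) (hε : 0 < ε) :
    ∀ᶠ n : ℕ in atTop, dTVNat (poissonPMF (1 + Real.exp c / 2)) (poissonPMF 1) - ε ≤
          dTV (unif (2 * n)) (fun y => (transMat a b (A n) ^ (tm b c n)) 1 y) := by
  have h1 := moments_to_poisson (fun n y => (transMat a b (A n) ^ (tm b c n)) 1 y)
    (fun n y => transMat_pow_nonneg a b hb hba (A n) _ 1 y) (fun n y => fx y) _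
    (mom_lim a b hb hba hab c A hA)
  have h2 := moments_to_poisson (fun n => unif (2 * n))
    (fun n y => by unfold unif; positivity) (fun n y => fx y) 1 (by
      intro k
      rw [one_pow]
      refine tendsto_const_nhds.congr' ?_
      filter_upwards [eventually_ge_atTop k] with n hn
      simp only [unif]
      rw [← Finset.mul_sum, fx_sum (2 * n) k (by omega), inv_mul_cancel₀]
      exact Nat.cast_ne_zero.mpr (Nat.factorial_ne_zero _))
  have hs : Summable (fun k => |poissonPMF (1 + Real.exp c / 2) k - poissonPMF 1 k|) :=
    ((pois_summable _).sub (pois_summable _)).abs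
  have hK := hs.hasSum.tendsto_sum_nat
  obtain ⟨K, hK⟩ := (hK.eventually (lt_mem_nhds (show
    (∑' k, |poissonPMF (1 + Real.exp c / 2) k - poissonPMF 1 k|) - ε < _ by linarith))).exists
  have h3 := tendsto_finsetSum (Finset.range K) (fun j _ => ((h2 j).sub (h1 j)).abs)
  have h4 : (∑' k, |poissonPMF (1 + Real.exp c / 2) k - poissonPMF 1 k|) - ε <
      ∑ j ∈ Finset.range K, |poissonPMF 1 j - poissonPMF (1 + Real.exp c / 2) j| := by
    simpa only [abs_sub_comm] using hK
  filter_upwards [h3.eventually (lt_mem_nhds h4)] with n hn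
  refine le_trans ?_ (dTV_ge _ _ K)
  unfold dTVNat
  linarith

/-- Suppose `b < a`. For every `c ∈ ℝ`, with
`t_N = ⌊(N/(2b))(log N − c)⌋` and `N = 2n`,
`liminf_{N→∞} d_TV(U, P^{t_N}(id,·)) ≥ d_TV(Poisson(1 + e^c/2), Poisson(1))`. -/
theorem brt_lower_bound_poisson (a b : ℝ) (hb : 0 < b) (hba : b < a) (hab : a + b = 2)
    (c : ℝ) :
    ∀ ε : ℝ, 0 < ε → ∃ n0 : ℕ, ∀ n : ℕ, n0 ≤ n →
      ∀ A : Finset (Fin (2 * n)), A.card = n →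
        dTVNat (poissonPMF (1 + Real.exp c / 2)) (poissonPMF 1) - ε ≤
          dTV (unif (2 * n))
            (fun y => (transMat a b A ^
              ⌊((2 * n : ℝ) / (2 * b)) * (Real.log (2 * n) - c)⌋₊) 1 y) := by
  intro ε hε
  classical
  by_contra! hcon
  have hex : ∀ n : ℕ, ∃ A : Finset (Fin (2 * n)), A.card = n := by
    intro n
    obtain ⟨A, -, hA⟩ := Finset.exists_subset_card_eq
      (show n ≤ (Finset.univ : Finset (Fin (2 * n))).card by simp; omega)
    exact ⟨A, hA⟩
  have hch : ∀ n : ℕ, ∃ A : Finset (Fin (2 * n)), A.card = n ∧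
      ((∃ A' : Finset (Fin (2 * n)), A'.card = n ∧ dTV (unif (2 * n))
          (fun y => (transMat a b A' ^ (tm b c n)) 1 y) <
        dTVNat (poissonPMF (1 + Real.exp c / 2)) (poissonPMF 1) - ε) →
        dTV (unif (2 * n)) (fun y => (transMat a b A ^ (tm b c n)) 1 y) <
        dTVNat (poissonPMF (1 + Real.exp c / 2)) (poissonPMF 1) - ε) := by
    intro n
    by_cases h : ∃ A' : Finset (Fin (2 * n)), A'.card = n ∧ dTV (unif (2 * n))
          (fun y => (transMat a b A' ^ (tm b c n)) 1 y) <
        dTVNat (poissonPMF (1 + Real.exp c / 2)) (poissonPMF 1) - ε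
    · obtain ⟨A, h1, h2⟩ := h
      exact ⟨A, h1, fun _ => h2⟩
    · obtain ⟨A, hA⟩ := hex n
      exact ⟨A, hA, fun h' => absurd h' h⟩
  choose A hA1 hA2 using hch
  obtain ⟨n0, hn0⟩ := Filter.eventually_atTop.mp (fam_lim a b hb hba hab c A hA1 ε hε)
  obtain ⟨n, hn, A', hA', hlt⟩ := hcon n0
  exact absurd (hA2 n ⟨A', hA', hlt⟩) (not_lt.mpr (hn0 n hn))

end BRT
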